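/- arXiv:1806.06090 — 3 statements merged into one kernel-verified Lean document; each statement's English description precedes it below -/
import Mathlib

section
/- A finite group G has exactly |G| − 3 cyclic subgroups if and only if G is isomorphic to Q_8, C_5, or D_10. -/
open Subgroup in
theorem aux_pow3 {G : Type*} [Group G] {a : G} (h : a ^ 3 = 1) (x : G) (hx : x ∈ zpowers a) :
    x = 1 ∨ x = a ∨ x = a⁻¹ := by
  obtain ⟨k, rfl⟩ := mem_zpowers_iff.1 hx
  have h3 : a ^ (3 : ℤ) = 1 := by exact_mod_cast h
  have e : a ^ k = a ^ (k % 3) := by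
    conv_lhs => rw [← Int.mul_ediv_add_emod k 3, zpow_add, zpow_mul, h3, one_zpow, one_mul]
  have : k % 3 = 0 ∨ k % 3 = 1 ∨ k % 3 = 2 := by omega
  rw [e]
  rcases this with h' | h' | h' <;> rw [h']
  · simp
  · simp
  · right; right
    rw [eq_inv_iff_mul_eq_one, ← h3]; group

open Subgroup in
theorem aux_pow4 {G : Type*} [Group G] {a : G} (h : a ^ 4 = 1) (x : G) (hx : x ∈ zpowers a) :
    x = 1 ∨ x = a ∨ x = a⁻¹ ∨ x = a ^ 2 := by
  obtain ⟨k, rfl⟩ := mem_zpowers_iff.1 hx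
  have h3 : a ^ (4 : ℤ) = 1 := by exact_mod_cast h
  have e : a ^ k = a ^ (k % 4) := by
    conv_lhs => rw [← Int.mul_ediv_add_emod k 4, zpow_add, zpow_mul, h3, one_zpow, one_mul]
  have : k % 4 = 0 ∨ k % 4 = 1 ∨ k % 4 = 2 ∨ k % 4 = 3 := by omega
  rw [e]
  rcases this with h' | h' | h' | h' <;> rw [h']
  · simp
  · simp
  · right; right; right; norm_cast
  · right; right; left
    rw [eq_inv_iff_mul_eq_one, ← h3]; group

theorem aux_list {G : Type*} [Group G] [Finite G] (hS : Nat.card {x : G // x ^ 2 ≠ 1} = 6)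
    (l : List G) (hl : l.Nodup) (hm : ∀ x ∈ l, x ^ 2 ≠ 1) : l.length ≤ 6 := by
  classical
  have := Fintype.ofFinite G
  rw [Nat.card_eq_fintype_card, Fintype.card_subtype] at hS
  rw [← List.toFinset_card_of_nodup hl, ← hS]
  apply Finset.card_le_card
  intro x hx
  simpa using hm x (by simpa using hx)

theorem aux_exists {G : Type*} [Group G] [Finite G] (hS : Nat.card {x : G // x ^ 2 ≠ 1} = 6)
    (l : List G) (hl : l.length < 6) : ∃ x : G, x ^ 2 ≠ 1 ∧ x ∉ l := by
  classical
  have := Fintype.ofFinite G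
  rw [Nat.card_eq_fintype_card, Fintype.card_subtype] at hS
  by_contra! h
  have h1 : Finset.univ.filter (fun x : G => x ^ 2 ≠ 1) ⊆ l.toFinset := by
    intro x hx
    simpa using h x (by simpa using hx)
  have := (Finset.card_le_card h1).trans (List.toFinset_card_le l)
  omega

theorem sq_comm {G : Type*} [Group G] {x a : G} (h : x * a = a * x) : (x * a) ^ 2 = x ^ 2 * a ^ 2 :=
  (show Commute x a from h).mul_pow 2

open Subgroup in
theorem L1 {G : Type*} [Group G] [Finite G] (hS : Nat.card {x : G // x ^ 2 ≠ 1} = 6)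
    {a y x : G} (ha : a ^ 2 ≠ 1) (hya : y * a = a * y) (hy : y ^ 2 = 1) (hyP : y ∉ zpowers a)
    (hx : x ^ 2 ≠ 1) (hxa : (x * a) ^ 2 ≠ 1) (hxa' : (x * a⁻¹) ^ 2 ≠ 1)
    (hxP : x ∉ zpowers a) (hxy : y⁻¹ * x ∉ zpowers a) : False := by
  have hA := mem_zpowers a
  have hya' : y * a⁻¹ = a⁻¹ * y := (show Commute y a from hya).inv_right
  have haa : a ≠ a⁻¹ := by
    intro h; apply ha; rw [sq]; nth_rw 2 [h]; simp
  have ha1 : a ≠ 1 := by rintro rfl; simp at ha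
  have key : ∀ u v p q : G, u⁻¹ * v ∉ zpowers a → p ∈ zpowers a → q ∈ zpowers a → u * p ≠ v * q := by
    intro u v p q h hp hq e
    apply h
    have : u⁻¹ * v = p * q⁻¹ := by
      rw [eq_mul_inv_iff_mul_eq, mul_assoc, ← e]; simp
    rw [this]; exact mul_mem hp (inv_mem hq)
  have hA' := inv_mem hA
  have h1 := one_mem (zpowers a)
  have k1 := fun p q => key 1 y p q (by simpa using hyP)
  have k2 := fun p q => key 1 x p q (by simpa using hxP)
  have k3 := fun p q => key y x p q (by simpa using hxy)
  have := aux_list hS [1 * a, 1 * a⁻¹, y * a, y * a⁻¹, x * 1, x * a, x * a⁻¹] (by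
    simp only [List.nodup_cons, List.mem_cons, List.not_mem_nil, not_or, or_false, mul_right_inj]
    simp only [k1 _ _ hA hA, k1 _ _ hA hA', k1 _ _ hA' hA, k1 _ _ hA' hA', 
      k2 _ _ hA hA, k2 _ _ hA hA', k2 _ _ hA' hA, k2 _ _ hA' hA', k2 _ _ hA h1, k2 _ _ hA' h1,
      k3 _ _ hA hA, k3 _ _ hA hA', k3 _ _ hA' hA, k3 _ _ hA' hA', k3 _ _ hA h1, k3 _ _ hA' h1]
    simp [haa, ha1, eq_comm]) (by
    simp [hx, hxa, hxa', sq_comm hya, sq_comm hya', hy, ha])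
  simp at this

open Subgroup in
theorem L2 {G : Type*} [Group G] [Finite G] (hS : Nat.card {x : G // x ^ 2 ≠ 1} = 6)
    {a y w : G} (ha : a ^ 2 ≠ 1) (hya : y * a = a * y) (hy : y ^ 2 = 1) (hyP : y ∉ zpowers a)
    (hwa : w * a = a * w) (hw : w ^ 2 = 1)
    (hwP : w ∉ zpowers a) (hwy : y⁻¹ * w ∉ zpowers a) : False := by
  have hA := mem_zpowers a
  have hya' : y * a⁻¹ = a⁻¹ * y := (show Commute y a from hya).inv_right
  have hwa' : w * a⁻¹ = a⁻¹ * w := (show Commute w a from hwa).inv_right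
  have haa : a ≠ a⁻¹ := by
    intro h; apply ha; rw [sq]; nth_rw 2 [h]; simp
  have key : ∀ u v p q : G, u⁻¹ * v ∉ zpowers a → p ∈ zpowers a → q ∈ zpowers a → u * p ≠ v * q := by
    intro u v p q h hp hq e
    apply h
    have : u⁻¹ * v = p * q⁻¹ := by
      rw [eq_mul_inv_iff_mul_eq, mul_assoc, ← e]; simp
    rw [this]; exact mul_mem hp (inv_mem hq)
  have hA' := inv_mem hA
  have h1 := one_mem (zpowers a)
  have hyi : y⁻¹ = y := by rw [inv_eq_iff_mul_eq_one, ← sq, hy]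
  have hwi : w⁻¹ = w := by rw [inv_eq_iff_mul_eq_one, ← sq, hw]
  have hyw : w⁻¹ * y ∉ zpowers a := by
    intro h; apply hwy; simpa using inv_mem h
  have k1 := fun p q => key 1 y p q (by simpa using hyP)
  have k2 := fun p q => key 1 w p q (by simpa using hwP)
  have k3 := fun p q => key y w p q (by simpa using hwy)
  -- the fourth coset
  have k4 := fun p q => key 1 (w * y) p q (by rw [← hwi]; simpa using hyw)
  have k6 := fun p q => key w (w * y) p q (by simpa using hyP)
  have hc : ∀ p ∈ zpowers a, y * p = p * y := by
    intro p hp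
    obtain ⟨k, rfl⟩ := mem_zpowers_iff.1 hp
    exact (show Commute y a from hya).zpow_right k
  have k5 := fun p q => key y (w * y) p q (by
    intro h
    have h' := hc _ h
    apply hwP
    have : w = y⁻¹ * (w * y) := by
      calc w = y * (y⁻¹ * (w * y)) * y⁻¹ := by group
        _ = y⁻¹ * (w * y) * y * y⁻¹ := by rw [h']
        _ = _ := mul_inv_cancel_right _ _
    rwa [this])
  have hs : ∃ s ∈ zpowers a, (w * y * s) ^ 2 ≠ 1 := by
    by_cases h : (w * y) ^ 2 = 1
    · refine ⟨a, hA, ?_⟩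
      rw [sq_comm, h, one_mul]; · exact ha
      rw [mul_assoc, hya, ← mul_assoc, hwa, mul_assoc]
    · exact ⟨1, h1, by simpa using h⟩
  obtain ⟨s, hs, hs2⟩ := hs
  have := aux_list hS [1 * a, 1 * a⁻¹, y * a, y * a⁻¹, w * a, w * a⁻¹, w * y * s] (by
    simp only [List.nodup_cons, List.mem_cons, List.not_mem_nil, not_or, or_false, mul_right_inj]
    simp only [k1 _ _ hA hA, k1 _ _ hA hA', k1 _ _ hA' hA, k1 _ _ hA' hA', 
      k2 _ _ hA hA, k2 _ _ hA hA', k2 _ _ hA' hA, k2 _ _ hA' hA',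
      k3 _ _ hA hA, k3 _ _ hA hA', k3 _ _ hA' hA, k3 _ _ hA' hA',
      k4 _ _ hA hs, k4 _ _ hA' hs, k5 _ _ hA hs, k5 _ _ hA' hs, k6 _ _ hA hs, k6 _ _ hA' hs]
    simp [haa]) (by
    simp [hs2, sq_comm hya, sq_comm hya', sq_comm hwa, sq_comm hwa', hy, hw, ha])
  simp at this

open Subgroup in
/-- no involution in the centralizer outside `⟨a⟩`. -/
theorem L3 {G : Type*} [Group G] [Finite G] (hS : Nat.card {x : G // x ^ 2 ≠ 1} = 6)
    {a : G} (ha : a ^ 2 ≠ 1) (h34 : a ^ 3 = 1 ∨ a ^ 4 = 1)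
    (hN : ∀ g : G, g * a = a * g ∨ g * a = a⁻¹ * g) {y : G} (hya : y * a = a * y) (hy : y ^ 2 = 1) :
    y ∈ zpowers a := by
  by_contra hyP
  have hP : ∀ x ∈ zpowers a, x ^ 2 ≠ 1 → x = a ∨ x = a⁻¹ := by
    intro x hx hx2
    rcases h34 with h | h
    · rcases aux_pow3 h x hx with rfl | rfl | rfl <;> simp_all
    · rcases aux_pow4 h x hx with rfl | rfl | rfl | rfl
      · simp at hx2
      · simp
      · simp
      · rw [← pow_mul] at hx2; exact absurd h hx2
  obtain ⟨x, hx, hxl⟩ := aux_exists hS [a, a⁻¹, y * a, y * a⁻¹] (by simp)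
  simp only [List.mem_cons, List.not_mem_nil, or_false, not_or] at hxl
  obtain ⟨n1, n2, n3, n4⟩ := hxl
  have hxP : x ∉ zpowers a := fun h => by rcases hP x h hx with h | h <;> contradiction
  have hc : ∀ p ∈ zpowers a, y * p = p * y := by
    intro p hp
    obtain ⟨k, rfl⟩ := mem_zpowers_iff.1 hp
    exact (show Commute y a from hya).zpow_right k
  have hxy : y⁻¹ * x ∉ zpowers a := by
    intro h
    have e : x = y * (y⁻¹ * x) := by group
    have h2 : (y⁻¹ * x) ^ 2 ≠ 1 := by
      intro h2; apply hx; rw [e, sq_comm (hc _ h), h2, hy, one_mul]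
    rcases hP _ h h2 with h' | h' <;> rw [h'] at e <;> contradiction
  have main : ∀ p ∈ zpowers a, (x * p) ^ 2 = 1 → False := by
    intro p hp h2
    have hpa : p * a = a * p := by
      obtain ⟨k, rfl⟩ := mem_zpowers_iff.1 hp
      exact ((Commute.refl a).zpow_left k)
    rcases hN (x * p) with h | h
    · refine L2 hS ha hya hy hyP h h2 ?_ ?_
      · intro h; exact hxP ((mul_mem_cancel_right hp).1 h)
      · intro h; rw [← mul_assoc] at h; exact hxy ((mul_mem_cancel_right hp).1 h)
    · -- inverting
      apply hx
      have hinv : ∀ q ∈ zpowers a, (x * p) * q = q⁻¹ * (x * p) := by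
        intro q hq
        obtain ⟨k, rfl⟩ := mem_zpowers_iff.1 hq
        have : SemiconjBy (x * p) a a⁻¹ := h
        have h3 := (this.zpow_right k).eq
        rwa [inv_zpow] at h3
      have := hinv p⁻¹ (inv_mem hp)
      have e : x = p * (x * p) := by simpa using this
      have e2 : x = (x * p) * p⁻¹ := by group
      rw [sq]; nth_rw 1 [e2]; nth_rw 2 [e]
      rw [sq] at h2
      rw [mul_assoc (x * p), inv_mul_cancel_left, h2]
  refine L1 hS ha hya hy hyP hx (main a (mem_zpowers a)) (main _ (inv_mem (mem_zpowers a))) hxP hxy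

open Subgroup in
/-- elements of order 3 all lie in one subgroup. -/
theorem L0 {G : Type*} [Group G] [Finite G] (hS : Nat.card {x : G // x ^ 2 ≠ 1} = 6)
    {a b : G} (ha1 : a ≠ 1) (ha : a ^ 3 = 1) (hb : b ^ 3 = 1) : b ∈ zpowers a := by
  by_contra hbP
  have hb1 : b ≠ 1 := by rintro rfl; exact hbP (one_mem _)
  have sq3 : ∀ x : G, x ^ 3 = 1 → x ^ 2 = x⁻¹ := by
    intro x h; rw [eq_inv_iff_mul_eq_one, ← h]; group
  have ne2 : ∀ x : G, x ≠ 1 → x ^ 3 = 1 → x ^ 2 ≠ 1 := by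
    intro x h h3 h2; rw [sq3 x h3] at h2; simp_all
  have nei : ∀ x : G, x ≠ 1 → x ^ 3 = 1 → x ≠ x⁻¹ := by
    intro x h h3 h2; apply ne2 x h h3; rw [sq]; nth_rw 2 [h2]; simp
  have hA := mem_zpowers a
  have hA' := inv_mem hA
  have h1 := one_mem (zpowers a)
  have e1 : a * a = a⁻¹ := by rw [← sq, sq3 a ha]
  have e2 : a⁻¹ * a⁻¹ = a := by rw [← mul_inv_rev, e1, inv_inv]
  by_cases hc : b * a = a * b
  · have key : ∀ u v p q : G, u⁻¹ * v ∉ zpowers a → p ∈ zpowers a → q ∈ zpowers a → u * p ≠ v * q := by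
      intro u v p q h hp hq e
      apply h
      have : u⁻¹ * v = p * q⁻¹ := by
        rw [eq_mul_inv_iff_mul_eq, mul_assoc, ← e]; simp
      rw [this]; exact mul_mem hp (inv_mem hq)
    have hb' : b⁻¹ ∉ zpowers a := by simpa using hbP
    have hbb : b⁻¹ * b⁻¹ ∉ zpowers a := by
      rw [← sq, inv_pow, sq3 b hb]; simpa using hbP
    have k1 := fun p q => key 1 b p q (by simpa using hbP)
    have k2 := fun p q => key 1 b⁻¹ p q (by simpa using hbP)
    have k3 := fun p q => key b b⁻¹ p q hbb
    have hca : Commute b a := hc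
    have n : ∀ u v : G, Commute u v → u ∉ zpowers a → u ^ 3 = 1 → v ^ 3 = 1 → v ∈ zpowers a →
        (u * v) ^ 2 ≠ 1 := by
      intro u v h hu h3 h3' hv
      apply ne2
      · intro h; apply hu; rw [mul_eq_one_iff_eq_inv.1 h]; exact inv_mem hv
      · rw [h.mul_pow, h3, h3', one_mul]
    have hai : a⁻¹ ^ 3 = 1 := by simp [ha]
    have hbi : b⁻¹ ^ 3 = 1 := by simp [hb]
    have := aux_list hS [1 * a, 1 * a⁻¹, b * 1, b * a, b * a⁻¹, b⁻¹ * 1, b⁻¹ * a] (by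
      simp only [List.nodup_cons, List.mem_cons, List.not_mem_nil, not_or, or_false, mul_right_inj]
      simp only [k1 _ _ hA hA, k1 _ _ hA hA', k1 _ _ hA' hA, k1 _ _ hA' hA', k1 _ _ hA h1, k1 _ _ hA' h1,
        k2 _ _ hA hA, k2 _ _ hA h1, k2 _ _ hA' hA, k2 _ _ hA' h1,
        k3 _ _ h1 hA, k3 _ _ h1 h1, k3 _ _ hA hA, k3 _ _ hA h1, k3 _ _ hA' hA, k3 _ _ hA' h1]
      simp [nei a ha1 ha, ha1, Ne.symm ha1]) (by
      have q1 := ne2 a ha1 ha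
      have q2 := ne2 b hb1 hb
      have q3 := n b a hca hbP hb ha hA
      have q4 := n b _ hca.inv_right hbP hb hai hA'
      have q5 := n _ _ hca.inv_left hb' hbi ha hA
      simp [q1, q2, q3, q4, q5])
    simp at this
  · have nab : b ≠ a := by rintro rfl; exact hbP hA
    have nab' : b ≠ a⁻¹ := by rintro rfl; exact hbP hA'
    have nab2 : b⁻¹ ≠ a := by rintro rfl; simp at hbP
    have n1 : a * b * a⁻¹ ≠ b := by
      intro h; apply hc; rw [mul_inv_eq_iff_eq_mul] at h; exact h.symm
    have n1' : a⁻¹ * b * a ≠ b := by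
      intro h; apply hc; rw [mul_assoc, inv_mul_eq_iff_eq_mul] at h; exact h
    have n2 : a * b * a⁻¹ ≠ b⁻¹ := by
      intro h
      apply n1'
      have h5 : a * b⁻¹ * a⁻¹ = b := by
        have := congrArg (·⁻¹) h
        simp only [mul_inv_rev, inv_inv] at this
        rw [mul_assoc, this]
      calc _ = (a * a) * b * (a⁻¹ * a⁻¹) := by rw [e1, e2]
        _ = a * (a * b * a⁻¹) * a⁻¹ := by group
        _ = b := by rw [h, h5]
    have n2' : a⁻¹ * b * a ≠ b⁻¹ := by
      intro h
      apply n1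
      have h5 : a⁻¹ * b⁻¹ * a = b := by
        have := congrArg (·⁻¹) h
        simp only [mul_inv_rev, inv_inv] at this
        rw [mul_assoc, this]
      calc _ = (a⁻¹ * a⁻¹) * b * (a * a) := by rw [e1, e2]
        _ = a⁻¹ * (a⁻¹ * b * a) * a := by group
        _ = b := by rw [h, h5]
    have n3 : a * b * a⁻¹ ≠ a⁻¹ * b * a := by
      intro h
      apply n1'
      calc _ = (a * a) * b * (a⁻¹ * a⁻¹) := by rw [e1, e2]
        _ = a * (a * b * a⁻¹) * a⁻¹ := by group
        _ = b := by rw [h]; group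
    have n4 : (a * b * a⁻¹)⁻¹ ≠ a⁻¹ * b * a := by
      intro h
      apply n2'
      have h5 : a⁻¹ * b⁻¹ * a = b := by
        calc _ = (a * a) * b⁻¹ * (a⁻¹ * a⁻¹) := by rw [e1, e2]
          _ = a * (a * b * a⁻¹)⁻¹ * a⁻¹ := by group
          _ = b := by rw [h]; group
      calc _ = (a⁻¹ * b⁻¹ * a)⁻¹ := by group
        _ = b⁻¹ := by rw [h5]
    obtain ⟨c, hcd⟩ : ∃ c, c = a * b * a⁻¹ := ⟨_, rfl⟩
    obtain ⟨d, hdd⟩ : ∃ d, d = a⁻¹ * b * a := ⟨_, rfl⟩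
    have hc3 : c ^ 3 = 1 := by rw [hcd, conj_pow, hb]; simp
    have hd3 : d ^ 3 = 1 := by
      have := conj_pow (i := 3) (a := a⁻¹) (b := b)
      rw [inv_inv, hb] at this; rw [hdd, this]; simp
    have hbc : b = a⁻¹ * c * a := by rw [hcd]; group
    have hbd : b = a * d * a⁻¹ := by rw [hdd]; group
    have hc1 : c ≠ 1 := by rintro rfl; simp at hbc; exact hb1 hbc
    have hd1 : d ≠ 1 := by rintro rfl; simp at hbd; exact hb1 hbd
    have hca : c ≠ a := by rintro rfl; simp at hbc; exact nab hbc
    have hca' : c ≠ a⁻¹ := by rintro rfl; simp at hbc; exact nab' hbc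
    have hda : d ≠ a := by rintro rfl; simp at hbd; exact nab hbd
    have hda' : d ≠ a⁻¹ := by rintro rfl; simp at hbd; exact nab' hbd
    rw [← hcd] at n1 n2 n3 n4
    rw [← hdd] at n1' n2' n3 n4
    have := aux_list hS [a, a⁻¹, b, b⁻¹, c, c⁻¹, d] (by
      have z1 := nei a ha1 ha
      have z2 := nei b hb1 hb
      have z3 := nei c hc1 hc3
      have z4 : a ≠ c⁻¹ := fun h => hca' (by rw [h, inv_inv])
      have z5 : b ≠ c⁻¹ := fun h => n2 (by rw [h, inv_inv])
      simp [z1, z2, z3, z4, z5, nab.symm, nab'.symm, nab2.symm, n1.symm, n2.symm, n3, n4, hca.symm,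
        hca'.symm, hda.symm, hda'.symm, n1'.symm, n2'.symm]) (by
      simp [ne2 a ha1 ha, ne2 b hb1 hb, ne2 c hc1 hc3, ne2 d hd1 hd3])
    simp at this

open Subgroup in
theorem aux_e {G : Type*} [Group G] (n : ℕ) [NeZero n] {a : G} (h : a ^ n = 1) :
    ∃ e : ZMod n → G, (∀ i, e i = a ^ i.val) ∧ (∀ i j, e (i + j) = e i * e j) ∧
      (∀ i j, e (j - i) = (e i)⁻¹ * e j) ∧ (∀ x ∈ zpowers a, ∃ i, x = e i) := by
  have hadd : ∀ i j : ZMod n, a ^ (i + j).val = a ^ i.val * a ^ j.val := by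
    intro i j
    rw [ZMod.val_add, ← pow_add, ← pow_eq_pow_mod _ h]
  refine ⟨fun i => a ^ i.val, fun _ => rfl, hadd, ?_, ?_⟩
  · intro i j
    rw [eq_inv_mul_iff_mul_eq, ← hadd]; congr 2; ring
  · intro x hx
    obtain ⟨k, rfl⟩ := mem_zpowers_iff.1 hx
    refine ⟨(k : ZMod n), ?_⟩
    have h3 : a ^ (n : ℤ) = 1 := by exact_mod_cast h
    show a ^ k = a ^ (k : ZMod n).val
    rw [← zpow_natCast, ZMod.val_intCast]
    conv_lhs => rw [← Int.mul_ediv_add_emod k n, zpow_add, zpow_mul, h3, one_zpow, one_mul]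

open Subgroup in
theorem isoQ {G : Type*} [Group G] {a x : G} (ha : a ^ 2 ≠ 1) (h4 : a ^ 4 = 1)
    (hx : x ∉ zpowers a) (hx2 : x ^ 2 = a ^ 2) (hxa : x * a = a⁻¹ * x)
    (hG : ∀ g : G, g ∈ zpowers a ∨ x⁻¹ * g ∈ zpowers a) : Nonempty (G ≃* QuaternionGroup 2) := by
  obtain ⟨e, he, hadd, hsub, hsurj⟩ := aux_e (2 * 2) (a := a) h4
  have hmem : ∀ i, e i ∈ zpowers a := fun i => by rw [he]; exact pow_mem (mem_zpowers a) _
  have hxe : ∀ i, e i * x = x * (e i)⁻¹ := by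
    intro i
    have h : SemiconjBy x a a⁻¹ := hxa
    have h' := (h.pow_right (i.val)).inv_right.eq
    rw [he, h']; simp
  have hord : orderOf a = 4 := by
    have := orderOf_eq_prime_pow (p := 2) (n := 1) (x := a) (by simpa using ha) (by simpa using h4)
    simpa using this
  let f : QuaternionGroup 2 → G := fun q => match q with
    | .a i => e i
    | .xa i => x * e i
  have e2 : e 2 = x ^ 2 := by rw [he, hx2]; rfl
  let F : QuaternionGroup 2 →* G := MonoidHom.mk' f (by
    rintro (i | i) (j | j)
    · simp only [QuaternionGroup.a_mul_a]; exact hadd i j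
    · simp only [QuaternionGroup.a_mul_xa]
      show x * e (j - i) = e i * (x * e j)
      rw [hsub, ← mul_assoc (e i), hxe, mul_assoc]
    · simp only [QuaternionGroup.xa_mul_a]
      show x * e (i + j) = x * e i * e j
      rw [hadd, mul_assoc]
    · simp only [QuaternionGroup.xa_mul_xa]
      show e (2 + j - i) = x * e i * (x * e j)
      rw [add_sub_assoc, hadd, hsub, e2, mul_assoc x, ← mul_assoc (e i), hxe, sq]
      simp only [mul_assoc])
  refine ⟨(MulEquiv.ofBijective F ⟨?_, ?_⟩).symm⟩
  · rw [injective_iff_map_eq_one]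
    rintro (i | i) h
    · have h : e i = 1 := h
      rw [he, ← orderOf_dvd_iff_pow_eq_one, hord] at h
      have hlt := ZMod.val_lt i
      have : i.val = 0 := Nat.eq_zero_of_dvd_of_lt h hlt
      rw [ZMod.val_eq_zero] at this
      subst this; rfl
    · have h : x * e i = 1 := h
      exfalso; apply hx
      rw [mul_eq_one_iff_eq_inv.1 h]; exact inv_mem (hmem i)
  · intro g
    rcases hG g with h | h
    · obtain ⟨i, hi⟩ := hsurj _ h
      exact ⟨.a i, hi.symm⟩
    · obtain ⟨i, hi⟩ := hsurj _ h
      refine ⟨.xa i, ?_⟩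
      show x * e i = g
      rw [← hi]; group

open Subgroup in
theorem isoD {G : Type*} [Group G] {a x : G} (hord : orderOf a = 5)
    (hx : x ∉ zpowers a) (hx2 : x ^ 2 = 1) (hxa : x * a = a⁻¹ * x)
    (hG : ∀ g : G, g ∈ zpowers a ∨ x⁻¹ * g ∈ zpowers a) : Nonempty (G ≃* DihedralGroup 5) := by
  obtain ⟨e, he, hadd, hsub, hsurj⟩ := aux_e 5 (a := a) (by rw [← hord]; exact pow_orderOf_eq_one a)
  have hmem : ∀ i, e i ∈ zpowers a := fun i => by rw [he]; exact pow_mem (mem_zpowers a) _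
  have hxe : ∀ i, e i * x = x * (e i)⁻¹ := by
    intro i
    have h : SemiconjBy x a a⁻¹ := hxa
    have h' := (h.pow_right (i.val)).inv_right.eq
    rw [he, h']; simp
  let f : DihedralGroup 5 → G := fun q => match q with
    | .r i => e i
    | .sr i => x * e i
  let F : DihedralGroup 5 →* G := MonoidHom.mk' f (by
    rintro (i | i) (j | j)
    · simp only [DihedralGroup.r_mul_r]; exact hadd i j
    · simp only [DihedralGroup.r_mul_sr]
      show x * e (j - i) = e i * (x * e j)
      rw [hsub, ← mul_assoc (e i), hxe, mul_assoc]
    · simp only [DihedralGroup.sr_mul_r]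
      show x * e (i + j) = x * e i * e j
      rw [hadd, mul_assoc]
    · simp only [DihedralGroup.sr_mul_sr]
      show e (j - i) = x * e i * (x * e j)
      rw [hsub, mul_assoc x, ← mul_assoc (e i), hxe, ← mul_assoc, ← mul_assoc, ← sq, hx2, one_mul])
  refine ⟨(MulEquiv.ofBijective F ⟨?_, ?_⟩).symm⟩
  · rw [injective_iff_map_eq_one]
    rintro (i | i) h
    · have h : e i = 1 := h
      rw [he, ← orderOf_dvd_iff_pow_eq_one, hord] at h
      have hlt := ZMod.val_lt i
      have : i.val = 0 := Nat.eq_zero_of_dvd_of_lt h hlt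
      rw [ZMod.val_eq_zero] at this
      subst this; rfl
    · have h : x * e i = 1 := h
      exfalso; apply hx
      rw [mul_eq_one_iff_eq_inv.1 h]; exact inv_mem (hmem i)
  · intro g
    rcases hG g with h | h
    · obtain ⟨i, hi⟩ := hsurj _ h
      exact ⟨.r i, hi.symm⟩
    · obtain ⟨i, hi⟩ := hsurj _ h
      refine ⟨.sr i, ?_⟩
      show x * e i = g
      rw [← hi]; group

open Subgroup in
theorem caseA {G : Type*} [Group G] {a : G} (hord : orderOf a = 5)
    (hG : ∀ x : G, x ^ 2 = 1 ∨ x ∈ zpowers a) :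
    Nonempty (G ≃* Multiplicative (ZMod 5)) ∨ Nonempty (G ≃* DihedralGroup 5) := by
  by_cases h : ∀ x : G, x ∈ zpowers a
  · left
    have h5 : Nat.card G = 5 := by rw [← orderOf_eq_card_of_forall_mem_zpowers h, hord]
    have : Fact (Nat.Prime 5) := ⟨by norm_num⟩
    exact ⟨mulEquivOfPrimeCardEq (p := 5) h5 (by simp)⟩
  · right
    push Not at h
    obtain ⟨g, hg⟩ := h
    have hA := mem_zpowers a
    have hinv : ∀ k, k ∉ zpowers a → k * a = a⁻¹ * k := by
      intro k hk
      have h1 := (hG k).resolve_right hk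
      have h2 := (hG (k * a)).resolve_right (fun h => hk ((mul_mem_cancel_right hA).1 h))
      rw [sq, mul_eq_one_iff_eq_inv, mul_inv_rev] at h2
      rw [sq, mul_eq_one_iff_eq_inv] at h1
      rw [h2, ← h1]
    refine isoD hord hg ((hG g).resolve_right hg) (hinv g hg) ?_
    intro k
    by_contra! hk
    obtain ⟨hk1, hk2⟩ := hk
    have h1 := hinv k hk1
    have h2 := hinv _ hk2
    have h3 := hinv g hg
    have s1 : SemiconjBy k a a⁻¹ := h1
    have s3 : SemiconjBy g a a⁻¹ := h3
    have s4 : SemiconjBy g⁻¹ a⁻¹ a := s3.inv_symm_left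
    have h6 := (s4.mul_left s1).eq
    have h5 : a⁻¹ = a := mul_right_cancel (h2.symm.trans h6)
    have : a ^ 2 = 1 := by rw [sq]; nth_rw 1 [← h5]; simp
    have := orderOf_dvd_of_pow_eq_one this
    rw [hord] at this; norm_num at this

open Subgroup in
theorem caseB3 {G : Type*} [Group G] [Finite G] (hS : Nat.card {x : G // x ^ 2 ≠ 1} = 6)
    (h46 : ∀ x : G, x ^ 4 = 1 ∨ x ^ 6 = 1) {a : G} (ha1 : a ≠ 1) (ha : a ^ 3 = 1) : False := by
  have e1 : a ^ 2 = a⁻¹ := by rw [eq_inv_iff_mul_eq_one, ← ha]; group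
  have ha2 : a ^ 2 ≠ 1 := by rw [e1]; simpa using ha1
  have hN : ∀ g : G, g * a = a * g ∨ g * a = a⁻¹ * g := by
    intro g
    have h := L0 hS ha1 ha (b := g * a * g⁻¹) (by rw [conj_pow, ha]; simp)
    rcases aux_pow3 ha _ h with h | h | h
    · exfalso; apply ha1; simpa using h
    · left; rwa [mul_inv_eq_iff_eq_mul] at h
    · right; rwa [mul_inv_eq_iff_eq_mul] at h
  have hP : ∀ x ∈ zpowers a, x ^ 2 = 1 → x = 1 := by
    intro x hx h
    rcases aux_pow3 ha x hx with rfl | rfl | rfl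
    · rfl
    · contradiction
    · simp at h; contradiction
  have hC : ∀ c : G, c * a = a * c → c ∈ zpowers a := by
    intro c hc
    have hc' : Commute c a := hc
    rcases h46 c with h | h
    · have h1 := L3 hS ha2 (Or.inl ha) hN (hc'.pow_left 2).eq (by rw [← pow_mul]; exact h)
      have h2 := hP _ h1 (by rw [← pow_mul]; exact h)
      exact L3 hS ha2 (Or.inl ha) hN hc h2
    · have h1 := L3 hS ha2 (Or.inl ha) hN (hc'.pow_left 3).eq (by rw [← pow_mul]; exact h)
      have h2 := hP _ h1 (by rw [← pow_mul]; exact h)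
      exact L0 hS ha1 ha h2
  obtain ⟨t, ht, htl⟩ := aux_exists hS [a, a⁻¹] (by simp)
  have hta := (hN t).resolve_left (fun h => by
    rcases aux_pow3 ha _ (hC t h) with rfl | rfl | rfl <;> simp at htl ht)
  obtain ⟨s, hs, hsl⟩ := aux_exists hS [a, a⁻¹, t, t * a, t * a⁻¹] (by simp)
  have hsa := (hN s).resolve_left (fun h => by
    rcases aux_pow3 ha _ (hC s h) with rfl | rfl | rfl <;> simp at hsl hs)
  have h1 := hC (t⁻¹ * s) (by
    have h3 : SemiconjBy t a a⁻¹ := hta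
    have h4 : SemiconjBy s a a⁻¹ := hsa
    have h5 : SemiconjBy t⁻¹ a⁻¹ a := h3.inv_symm_left
    exact (h5.mul_left h4).eq)
  rcases aux_pow3 ha _ h1 with h | h | h <;> rw [inv_mul_eq_iff_eq_mul] at h <;> subst h <;> simp at hsl

open Subgroup in
theorem caseB4 {G : Type*} [Group G] [Finite G] (hS : Nat.card {x : G // x ^ 2 ≠ 1} = 6)
    (h4 : ∀ x : G, x ^ 4 = 1) {a : G} (ha2 : a ^ 2 ≠ 1)
    (hN : ∀ g : G, g * a = a * g ∨ g * a = a⁻¹ * g) : Nonempty (G ≃* QuaternionGroup 2) := by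
  have hP : ∀ x ∈ zpowers a, x ^ 2 ≠ 1 → x = a ∨ x = a⁻¹ := by
    intro x hx hx2
    rcases aux_pow4 (h4 a) x hx with rfl | rfl | rfl | rfl
    · simp at hx2
    · simp
    · simp
    · rw [← pow_mul] at hx2; exact absurd (h4 a) hx2
  have hP2 : ∀ x : G, x ^ 2 ∈ zpowers a → x ^ 2 ≠ 1 → x ^ 2 = a ^ 2 := by
    intro x hx hx2
    have h := h4 x
    rw [show 4 = 2 * 2 from rfl, pow_mul] at h
    rcases aux_pow4 (h4 a) _ hx with h' | h' | h' | h'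
    · contradiction
    · rw [h'] at h; contradiction
    · rw [h', inv_pow, inv_eq_one] at h; contradiction
    · exact h'
  have hC : ∀ c : G, c * a = a * c → c ∈ zpowers a := by
    intro c hc
    by_contra hcP
    have hc' : Commute c a := hc
    have hc2 : c ^ 2 ≠ 1 := fun h => hcP (L3 hS ha2 (Or.inr (h4 a)) hN hc h)
    have h1 := L3 hS ha2 (Or.inr (h4 a)) hN (hc'.pow_left 2).eq (by rw [← pow_mul]; exact h4 c)
    have h2 := hP2 c h1 hc2
    have h3 := L3 hS ha2 (Or.inr (h4 a)) hN (y := c * a) (hc'.mul_left (Commute.refl a)).eq (by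
      rw [sq_comm hc, h2, ← pow_add]; exact h4 a)
    exact hcP ((mul_mem_cancel_right (mem_zpowers a)).1 h3)
  obtain ⟨t, ht, htl⟩ := aux_exists hS [a, a⁻¹] (by simp)
  have htP : t ∉ zpowers a := fun h => by
    rcases hP t h ht with rfl | rfl <;> simp at htl
  have hta := (hN t).resolve_left (fun h => htP (hC t h))
  have h3 : SemiconjBy t a a⁻¹ := hta
  have h5 : SemiconjBy t⁻¹ a⁻¹ a := h3.inv_symm_left
  refine isoQ ha2 (h4 a) htP (hP2 t (hC _ ?_) ht) hta ?_
  · have := h3.inv_right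
    rw [inv_inv] at this
    rw [sq]; exact (this.mul_left h3).eq
  · intro g
    rcases hN g with h | h
    · exact Or.inl (hC g h)
    · exact Or.inr (hC _ (h5.mul_left h).eq)

open Subgroup in
theorem fixedB {G : Type*} [Group G] [Finite G]
    (hT : Nat.card {H : Subgroup G // ∃ a : G, a ^ 2 ≠ 1 ∧ zpowers a = H} = 3)
    (h4 : ∀ x : G, x ^ 4 = 1) : ∃ a : G, a ^ 2 ≠ 1 ∧ ∀ g : G, g * a = a * g ∨ g * a = a⁻¹ * g := by
  have : Fact (Nat.Prime 2) := ⟨Nat.prime_two⟩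
  have hp : IsPGroup 2 G := isPGroup_iff_pow_pow_eq_one.2 (fun g => ⟨2, h4 g⟩)
  have hmap : ∀ g a : G, (zpowers a).map (MulAut.conj g).toMonoidHom = zpowers (g * a * g⁻¹) := by
    intro g a
    rw [MonoidHom.map_zpowers]; simp
  let _ : MulAction G {H : Subgroup G // ∃ a : G, a ^ 2 ≠ 1 ∧ zpowers a = H} :=
    { smul := fun g H => ⟨H.1.map (MulAut.conj g).toMonoidHom, by
        obtain ⟨a, ha, h⟩ := H.2
        refine ⟨g * a * g⁻¹, ?_, ?_⟩
        · rw [conj_pow]; simpa using ha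
        · rw [← h, hmap]⟩
      one_smul := by
        rintro ⟨H, a, ha, rfl⟩
        apply Subtype.ext
        show (zpowers a).map _ = _
        rw [hmap]; simp
      mul_smul := by
        rintro g k ⟨H, a, ha, rfl⟩
        apply Subtype.ext
        show (zpowers a).map _ = ((zpowers a).map _).map _
        rw [hmap, hmap, hmap]; congr 1; group }
  obtain ⟨⟨H, a, ha, rfl⟩, hfix⟩ := hp.nonempty_fixed_point_of_prime_not_dvd_card
    {H : Subgroup G // ∃ a : G, a ^ 2 ≠ 1 ∧ zpowers a = H} (by rw [hT]; norm_num)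
  refine ⟨a, ha, fun g => ?_⟩
  have h := congrArg Subtype.val (hfix g)
  have h : (zpowers a).map (MulAut.conj g).toMonoidHom = zpowers a := h
  rw [hmap] at h
  have h1 : g * a * g⁻¹ ∈ zpowers a := by rw [← h]; exact mem_zpowers _
  have h2 : (g * a * g⁻¹) ^ 2 ≠ 1 := by rw [conj_pow]; simpa using ha
  rcases aux_pow4 (h4 a) _ h1 with h' | h' | h' | h'
  · rw [h'] at h2; simp at h2
  · left; rwa [mul_inv_eq_iff_eq_mul] at h'
  · right; rwa [mul_inv_eq_iff_eq_mul] at h'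
  · rw [h', ← pow_mul] at h2; exact absurd (h4 a) h2

open Subgroup in
theorem caseB {G : Type*} [Group G] [Finite G] (hS : Nat.card {x : G // x ^ 2 ≠ 1} = 6)
    (hT : Nat.card {H : Subgroup G // ∃ a : G, a ^ 2 ≠ 1 ∧ zpowers a = H} = 3)
    (h46 : ∀ x : G, x ^ 4 = 1 ∨ x ^ 6 = 1) : Nonempty (G ≃* QuaternionGroup 2) := by
  have h4 : ∀ x : G, x ^ 4 = 1 := by
    intro x
    rcases h46 x with h | h
    · exact h
    · by_contra hx
      refine caseB3 hS h46 (a := x ^ 2) ?_ (by rw [← pow_mul]; exact h)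
      intro h2; apply hx; rw [show 4 = 2 * 2 from rfl, pow_mul, h2, one_pow]
  obtain ⟨a, ha, hN⟩ := fixedB hT h4
  exact caseB4 hS h4 ha hN

open Subgroup in
theorem fibre_card {G : Type*} [Group G] [Fintype G] (x : G) :
    haveI := Classical.decEq (Subgroup G)
    (Finset.univ.filter (fun y : G => zpowers y = zpowers x)).card = Nat.totient (Nat.card (zpowers x)) := by
  classical
  have h := IsCyclic.card_orderOf_eq_totient (α := zpowers x) (d := orderOf x)
    (by rw [Fintype.card_zpowers])
  rw [Nat.card_zpowers, ← h, ← Finset.card_map (Function.Embedding.subtype (· ∈ zpowers x))]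
  congr 1
  ext y
  simp only [Finset.mem_filter, Finset.mem_univ, true_and, Finset.mem_map,
    Function.Embedding.subtype_apply, Subtype.exists, exists_prop, orderOf_mk, exists_eq_right_right]
  constructor
  · intro e
    refine ⟨?_, by rw [← Nat.card_zpowers, e, Nat.card_zpowers]⟩
    rw [← e]; exact mem_zpowers y
  · rintro ⟨h2, h1⟩
    apply Subgroup.eq_of_le_of_card_ge
    · simpa using h2
    · rw [Nat.card_zpowers, Nat.card_zpowers, h1]

theorem tot_dvd {n : ℕ} (h : Nat.totient n ∣ 4) : n ∣ 120 := by
  rw [Nat.dvd_iff_prime_pow_dvd_dvd]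
  intro p k hp hpk
  have h1 : Nat.totient (p ^ k) ∣ 4 := (Nat.totient_dvd_of_dvd hpk).trans h
  rcases k with _ | k
  · simp
  rw [Nat.totient_prime_pow_succ hp] at h1
  have h2 : p ^ k ∣ 4 := (Dvd.intro _ rfl).trans h1
  have h3 : p - 1 ∣ 4 := (Dvd.intro_left _ rfl).trans h1
  have hp5 : p ≤ 5 := by have := Nat.le_of_dvd (by norm_num) h3; omega
  have hp2 := hp.two_le
  have hk : k ≤ 2 := by
    by_contra! hk
    have := Nat.le_of_dvd (by norm_num) h2
    have := Nat.pow_le_pow_right (n := 2) (by norm_num) hk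
    have := Nat.pow_le_pow_left hp2 k
    omega
  interval_cases p <;> interval_cases k <;> revert h1 hp <;> norm_num

theorem tot_cases {n : ℕ} (hn : n ≠ 0) (h : Nat.totient n ∣ 4) :
    (n.totient = 1 ∧ (n = 1 ∨ n = 2)) ∨ (n.totient = 2 ∧ (n = 3 ∨ n = 4 ∨ n = 6)) ∨
    (n.totient = 4 ∧ (n = 5 ∨ n = 8 ∨ n = 10 ∨ n = 12)) := by
  have h1 := tot_dvd h
  have h2 : n ∈ Nat.divisors 120 := by simp [h1]
  have key : ∀ n ∈ Nat.divisors 120, Nat.totient n ∣ 4 → 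
    (n.totient = 1 ∧ (n = 1 ∨ n = 2)) ∨ (n.totient = 2 ∧ (n = 3 ∨ n = 4 ∨ n = 6)) ∨
    (n.totient = 4 ∧ (n = 5 ∨ n = 8 ∨ n = 10 ∨ n = 12)) := by decide +kernel
  exact key n h2 h

open Subgroup in
theorem cyc_count (G : Type*) [Group G] [Fintype G] :
    haveI := Classical.decEq (Subgroup G)
    Nat.card {H : Subgroup G // IsCyclic H} = (Finset.univ.image (zpowers : G → Subgroup G)).card := by
  classical
  refine Nat.subtype_card _ (fun H => ?_)
  rw [Finset.mem_image]
  constructor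
  · rintro ⟨x, -, rfl⟩; infer_instance
  · intro h
    obtain ⟨x, hx⟩ := (Subgroup.isCyclic_iff_exists_zpowers_eq_top H).1 h
    exact ⟨x, Finset.mem_univ _, hx⟩

/-- combinatorics of the sum. -/
theorem sum_three {ι : Type*} (D : Finset ι) (f : ι → ℕ) (hpos : ∀ i ∈ D, 0 < f i)
    (hpar : ∀ i ∈ D, f i = 1 ∨ Even (f i)) (hsum : ∑ i ∈ D, f i = D.card + 3) :
    (∃ i ∈ D, f i = 4 ∧ ∀ j ∈ D, j = i ∨ f j = 1) ∨
    ((∀ i ∈ D, f i = 1 ∨ f i = 2) ∧ (D.filter (fun i => f i ≠ 1)).card = 3) := by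
  classical
  set T := D.filter (fun i => f i ≠ 1) with hT
  have h1 : ∑ i ∈ D, (f i - 1) = 3 := by
    have : ∑ i ∈ D, f i = ∑ i ∈ D, ((f i - 1) + 1) :=
      Finset.sum_congr rfl (fun i hi => by have := hpos i hi; omega)
    rw [Finset.sum_add_distrib] at this
    simp at this; omega
  have h2 : ∑ i ∈ T, (f i - 1) = 3 := by
    rw [← h1]; apply Finset.sum_subset (Finset.filter_subset _ _)
    intro i hi hi'
    simp [hT, hi] at hi'
    omega
  have hTe : ∀ i ∈ T, i ∈ D ∧ Even (f i) ∧ 2 ≤ f i := by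
    intro i hi
    rw [hT, Finset.mem_filter] at hi
    have := (hpar i hi.1).resolve_left hi.2
    have h0 := hpos i hi.1
    exact ⟨hi.1, this, by omega⟩
  have hle : T.card ≤ 3 := by
    rw [← h2, Finset.card_eq_sum_ones]
    exact Finset.sum_le_sum (fun i hi => by have := (hTe i hi).2.2; omega)
  have hDT : ∀ i ∈ D, f i = 1 ∨ i ∈ T := by
    intro i hi
    by_cases h : f i = 1
    · exact Or.inl h
    · exact Or.inr (by simp [hT, hi, h])
  have : T.card = 0 ∨ T.card = 1 ∨ T.card = 2 ∨ T.card = 3 := by omega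
  rcases this with h | h | h | h
  · rw [Finset.card_eq_zero] at h; rw [h] at h2; simp at h2
  · obtain ⟨i, hi⟩ := Finset.card_eq_one.1 h
    rw [hi, Finset.sum_singleton] at h2
    left
    refine ⟨i, (hTe i (by simp [hi])).1, by omega, fun j hj => ?_⟩
    rcases hDT j hj with h | h
    · exact Or.inr h
    · left; simpa [hi] using h
  · obtain ⟨i, j, hij, hi⟩ := Finset.card_eq_two.1 h
    rw [hi, Finset.sum_pair hij] at h2
    obtain ⟨-, ⟨u, hu⟩, h3⟩ := hTe i (by simp [hi])
    obtain ⟨-, ⟨v, hv⟩, h4⟩ := hTe j (by simp [hi])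
    omega
  · right
    refine ⟨fun i hi => ?_, h⟩
    rcases hDT i hi with h' | h'
    · exact Or.inl h'
    · right
      have h5 : ∑ i ∈ T.erase i, 1 ≤ ∑ i ∈ T.erase i, (f i - 1) :=
        Finset.sum_le_sum (fun i hi => by have := (hTe i (Finset.mem_of_mem_erase hi)).2.2; omega)
      rw [← Finset.card_eq_sum_ones, Finset.card_erase_of_mem h', h] at h5
      rw [← Finset.add_sum_erase _ _ h'] at h2
      have := (hTe i h').2.2
      omega

open Subgroup in
theorem fwd (G : Type*) [Group G] [Finite G]
    (h : Nat.card {H : Subgroup G // IsCyclic H} = Nat.card G - 3) :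
      (Nonempty (G ≃* QuaternionGroup 2) ∨
       Nonempty (G ≃* Multiplicative (ZMod 5)) ∨
       Nonempty (G ≃* DihedralGroup 5)) := by
  classical
  have := Fintype.ofFinite G
  rw [cyc_count] at h
  set D := Finset.univ.image (zpowers : G → Subgroup G) with hD
  have hDm : ∀ x : G, zpowers x ∈ D := fun x => Finset.mem_image_of_mem _ (Finset.mem_univ x)
  have hDpos : 0 < D.card := Finset.card_pos.2 ⟨_, hDm 1⟩
  have hsum : ∑ H ∈ D, Nat.totient (Nat.card H) = D.card + 3 := by
    have h1 := Finset.card_eq_sum_card_image (zpowers : G → Subgroup G) Finset.univ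
    rw [Finset.card_univ, ← Nat.card_eq_fintype_card] at h1
    have h2 : Nat.card G = D.card + 3 := by omega
    rw [← h2, h1]
    apply Finset.sum_congr rfl
    intro H hH
    obtain ⟨x, -, rfl⟩ := Finset.mem_image.1 hH
    rw [← fibre_card x]
  have htp : ∀ H : Subgroup G, Nat.card H ≠ 0 := fun H => Nat.card_pos.ne'
  have h1sq : ∀ x : G, Nat.totient (orderOf x) = 1 ↔ x ^ 2 = 1 := by
    intro x
    rw [Nat.totient_eq_one_iff, ← Nat.dvd_prime Nat.prime_two, orderOf_dvd_iff_pow_eq_one]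
  rcases sum_three D (fun H => Nat.totient (Nat.card H))
    (fun H _ => Nat.totient_pos.2 (Nat.pos_of_ne_zero (htp H)))
    (fun H _ => by
      by_cases h3 : 2 < Nat.card H
      · exact Or.inr (Nat.totient_even h3)
      · have := htp H
        left; rw [Nat.totient_eq_one_iff]; omega) hsum with h' | ⟨h1, h2⟩
  · right
    obtain ⟨H, hH, h4, hall⟩ := h'
    obtain ⟨a, -, rfl⟩ := Finset.mem_image.1 hH
    simp only [Nat.card_zpowers] at h4
    have hall' : ∀ x : G, zpowers x = zpowers a ∨ x ^ 2 = 1 := by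
      intro x
      have := hall _ (hDm x)
      rwa [Nat.card_zpowers, h1sq] at this
    have h5 : orderOf a = 5 := by
      have h0 := tot_cases (n := orderOf a) (orderOf_pos a).ne' (by rw [h4])
      have key : ∀ d, d ∣ orderOf a → orderOf a / d = orderOf a ∨ orderOf a / d ∣ 2 := by
        intro d hd
        have hd0 : d ≠ 0 := (Nat.pos_of_dvd_of_pos hd (orderOf_pos a)).ne'
        have h6 := orderOf_pow_of_dvd hd0 hd
        rcases hall' (a ^ d) with h | h
        · left; rw [← h6, ← Nat.card_zpowers, h, Nat.card_zpowers]
        · right; rw [← h6]; exact orderOf_dvd_of_pow_eq_one h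
      have : orderOf a = 5 ∨ orderOf a = 8 ∨ orderOf a = 10 ∨ orderOf a = 12 := by
        rw [h4] at h0; simpa using h0
      rcases this with h | h | h | h
      · exact h
      · have := key 2 (by rw [h]; norm_num); rw [h] at this; norm_num at this
      · have := key 2 (by rw [h]; norm_num); rw [h] at this; norm_num at this
      · have := key 4 (by rw [h]; norm_num); rw [h] at this; norm_num at this
    apply caseA h5
    intro x
    rcases hall' x with h | h
    · right; rw [← h]; exact mem_zpowers x
    · exact Or.inl h
  · left
    have hmT : ∀ H : Subgroup G, H ∈ D.filter (fun H : Subgroup G => Nat.totient (Nat.card H) ≠ 1) ↔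
        ∃ a : G, a ^ 2 ≠ 1 ∧ zpowers a = H := by
      intro H
      rw [Finset.mem_filter, hD, Finset.mem_image]
      constructor
      · rintro ⟨⟨a, -, rfl⟩, h⟩
        rw [Nat.card_zpowers, Ne, h1sq] at h
        exact ⟨a, h, rfl⟩
      · rintro ⟨a, h, rfl⟩
        rw [Nat.card_zpowers, Ne, h1sq]
        exact ⟨⟨a, Finset.mem_univ _, rfl⟩, h⟩
    apply caseB
    · rw [Nat.card_eq_fintype_card, Fintype.card_subtype]
      rw [Finset.card_eq_sum_card_fiberwise (f := zpowers)
        (t := D.filter (fun H : Subgroup G => Nat.totient (Nat.card H) ≠ 1))]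
      · rw [Finset.sum_congr rfl (g := fun _ => 2)]
        · rw [Finset.sum_const, h2]; rfl
        · intro H hH
          obtain ⟨a, ha, rfl⟩ := (hmT H).1 hH
          have h3 := (h1 _ (hDm a)).resolve_left (by rwa [Nat.card_zpowers, h1sq])
          refine Eq.trans ?_ ((fibre_card a).trans h3)
          congr 1
          ext y
          simp only [Finset.mem_filter, Finset.mem_univ, true_and, and_iff_right_iff_imp]
          intro hy
          rwa [Ne, ← h1sq, ← Nat.card_zpowers, hy, Nat.card_zpowers, h1sq]
      · intro x hx
        simp only [Finset.coe_filter, Finset.mem_univ, true_and, Set.mem_ofPred_eq] at hx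
        exact Finset.mem_coe.2 ((hmT _).2 ⟨x, hx, rfl⟩)
    · rw [← h2]; exact Nat.subtype_card _ hmT
    · intro x
      have h3 := h1 _ (hDm x)
      simp only [Nat.card_zpowers] at h3
      have h0 := tot_cases (n := orderOf x) (orderOf_pos x).ne' (by rcases h3 with h | h <;> rw [h] <;> norm_num)
      have : orderOf x ∣ 4 ∨ orderOf x ∣ 6 := by
        have : orderOf x = 1 ∨ orderOf x = 2 ∨ orderOf x = 3 ∨ orderOf x = 4 ∨ orderOf x = 6 := by omega
        rcases this with h | h | h | h | h <;> rw [h] <;> norm_num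
      rwa [orderOf_dvd_iff_pow_eq_one, orderOf_dvd_iff_pow_eq_one] at this

open Subgroup in
theorem bwd_count (G : Type*) [Group G] [Fintype G] [DecidableEq G] (m : ℕ)
    (hm : ∀ x : G, x ^ m = 1) (hm0 : 0 < m) :
    Nat.card {H : Subgroup G // IsCyclic H} =
      (Finset.univ.image (fun x : G => (Finset.range m).image (fun k => x ^ k))).card := by
  classical
  rw [cyc_count]
  have hc : ∀ x : G, (((Finset.range m).image (fun k => x ^ k) : Finset G) : Set G) = (zpowers x : Set G) := by
    intro x
    ext y
    simp only [Finset.coe_image, Finset.coe_range, Set.mem_image, Set.mem_Iio, SetLike.mem_coe]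
    constructor
    · rintro ⟨k, -, rfl⟩; exact pow_mem (mem_zpowers x) k
    · intro hy
      obtain ⟨k, -, rfl⟩ := (mem_zpowers_iff_mem_range_orderOf.trans Finset.mem_image).1 hy
      refine ⟨k % m, Nat.mod_lt _ hm0, ?_⟩
      rw [← pow_eq_pow_mod _ (hm x)]
  rw [← Finset.card_image_of_injective _ (SetLike.coe_injective (A := Subgroup G)),
    ← Finset.card_image_of_injective (Finset.univ.image
      (fun x : G => (Finset.range m).image (fun k => x ^ k))) Finset.coe_injective,
    Finset.image_image, Finset.image_image]
  congr 1
  apply Finset.image_congr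
  intro x _
  exact (hc x).symm

theorem stmt_3 (G : Type*) [Group G] [Finite G] :
    Nat.card {H : Subgroup G // IsCyclic H} = Nat.card G - 3 ↔
      (Nonempty (G ≃* QuaternionGroup 2) ∨
       Nonempty (G ≃* Multiplicative (ZMod 5)) ∨
       Nonempty (G ≃* DihedralGroup 5)) := by
  refine ⟨fwd G, ?_⟩
  have tr : ∀ (K : Type) [Group K], Nonempty (G ≃* K) →
      Nat.card {H : Subgroup K // IsCyclic H} = Nat.card K - 3 →
      Nat.card {H : Subgroup G // IsCyclic H} = Nat.card G - 3 := by
    rintro K _ ⟨e⟩ h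
    rw [Nat.card_congr e.toEquiv, ← h]
    refine Nat.card_congr (Equiv.subtypeEquiv e.mapSubgroup.toEquiv ?_)
    intro H
    exact (e.subgroupMap H).isCyclic
  rintro (h | h | h)
  · apply tr _ h
    rw [bwd_count _ 4 (by decide) (by decide), Nat.card_eq_fintype_card]
    decide
  · apply tr _ h
    rw [bwd_count _ 5 (by decide) (by decide), Nat.card_eq_fintype_card]
    decide
  · apply tr _ h
    rw [bwd_count _ 10 (by decide) (by decide), Nat.card_eq_fintype_card]
    decide
end

section
/- A finite group G has exactly |G| − 5 cyclic subgroups if and only if G is isomorphic to C_7, D_14, or the nontrivial semidirect product C_3 ⋊ C_4 (the dicyclic group of order 12). -/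
namespace CycSub

open Finset

/-- number of elements of order `d` -/
noncomputable def NN (G : Type*) [Group G] [Fintype G] (d : ℕ) : ℕ :=
  (univ.filter (fun g : G => orderOf g = d)).card

/-- number of cyclic subgroups of order `d` -/
noncomputable def cc (G : Type*) [Group G] (d : ℕ) : ℕ :=
  Nat.card {H : Subgroup G // IsCyclic H ∧ Nat.card H = d}

section
variable {G : Type*} [Group G] [Fintype G]

lemma card_gens (H : Subgroup G) [IsCyclic H] :
    Nat.card {g : G // Subgroup.zpowers g = H} = Nat.totient (Nat.card H) := by
  classical
  have h := IsCyclic.card_orderOf_eq_totient (α := H) (d := Fintype.card H) dvd_rfl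
  rw [Nat.card_eq_fintype_card (α := H), ← h, ← Fintype.card_subtype, ← Nat.card_eq_fintype_card]
  have key : ∀ g : G, Subgroup.zpowers g = H → g ∈ H := fun g hg => by
    rw [← hg]; exact Subgroup.mem_zpowers g
  refine Nat.card_congr ⟨fun g => ⟨⟨g.1, key _ g.2⟩, ?_⟩, fun h => ⟨h.1.1, ?_⟩, ?_, ?_⟩
  · rw [Subgroup.orderOf_mk, ← Nat.card_eq_fintype_card, ← Nat.card_zpowers, g.2]
  · apply Subgroup.eq_of_le_of_card_ge
    · rw [Subgroup.zpowers_le]; exact h.1.2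
    · rw [Nat.card_zpowers, Subgroup.orderOf_coe, h.2, Nat.card_eq_fintype_card]
  · intro g; rfl
  · intro h; rfl

lemma NN_eq (d : ℕ) : NN G d = Nat.totient d * cc G d := by
  classical
  have e : {g : G // orderOf g = d} ≃
      Σ H : {H : Subgroup G // IsCyclic H ∧ Nat.card H = d}, {g : G // Subgroup.zpowers g = H.1} :=
    ⟨fun g => ⟨⟨Subgroup.zpowers g.1, inferInstance, by rw [Nat.card_zpowers, g.2]⟩, ⟨g.1, rfl⟩⟩,
     fun p => ⟨p.2.1, by rw [← Nat.card_zpowers, p.2.2, p.1.2.2]⟩,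
     fun g => rfl, by
      rintro ⟨⟨H, hH⟩, ⟨g, hg⟩⟩
      dsimp only at hg
      subst hg
      rfl⟩
  unfold NN cc
  rw [← Fintype.card_subtype, ← Nat.card_eq_fintype_card, Nat.card_congr e, Nat.card_sigma]
  rw [Finset.sum_congr rfl (g := fun _ => Nat.totient d)]
  · simp [Nat.card_eq_fintype_card, mul_comm]
  · rintro ⟨H, hH, hd⟩ -
    rw [card_gens, hd]

lemma sum_NN (M : ℕ) (hM : Fintype.card G < M) : ∑ d ∈ range M, NN G d = Fintype.card G := by
  unfold NN
  rw [← Finset.card_eq_sum_card_fiberwise]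
  · rfl
  · intro g _
    simp only [coe_range, Set.mem_Iio]
    exact lt_of_le_of_lt orderOf_le_card_univ hM

lemma sum_cc (M : ℕ) (hM : Fintype.card G < M) :
    ∑ d ∈ range M, cc G d = Nat.card {H : Subgroup G // IsCyclic H} := by
  classical
  have : ∀ d, cc G d = (univ.filter
      (fun H : {H : Subgroup G // IsCyclic H} => Nat.card H.1 = d)).card := by
    intro d
    unfold cc
    rw [← Fintype.card_subtype, ← Nat.card_eq_fintype_card]
    exact Nat.card_congr (Equiv.subtypeSubtypeEquivSubtypeInter _ _).symm
  simp_rw [this]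
  rw [← Finset.card_eq_sum_card_fiberwise]
  · rw [Nat.card_eq_fintype_card]; rfl
  · intro H _
    simp only [coe_range, Set.mem_Iio]
    refine lt_of_le_of_lt ?_ hM
    rw [← Nat.card_eq_fintype_card]
    exact Subgroup.card_le_card_group H.1

lemma totient_big (n : ℕ) (hn : 19 ≤ n) : 7 ≤ Nat.totient n := by
  by_contra! hlt
  have hpos : 0 < n := by omega
  have hle : ∀ m, m ∣ n → Nat.totient m ≤ 6 := fun m hm =>
    (Nat.le_of_dvd (Nat.totient_pos.2 hpos) (Nat.totient_dvd_of_dvd hm)).trans (by omega)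
  have hd : n ∣ 2520 := by
    rw [← Nat.factorization_prime_le_iff_dvd (by omega) (by norm_num)]
    intro p hp
    rw [← hp.pow_dvd_iff_le_factorization (by norm_num)]
    have h0 : p ^ n.factorization p ∣ n := Nat.ordProj_dvd n p
    rcases Nat.eq_zero_or_pos (n.factorization p) with h1 | h1
    · simp [h1]
    have hpn : p ∣ n := (dvd_pow_self p h1.ne').trans h0
    have hp7 : p ≤ 7 := by
      have := hle p hpn
      rw [Nat.totient_prime hp] at this
      omega
    have aux : ∀ k, 6 < Nat.totient (p ^ (k + 1)) → p ^ n.factorization p ∣ p ^ k := by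
      intro k hk
      apply pow_dvd_pow
      by_contra! hlt2
      have := hle _ ((pow_dvd_pow p hlt2).trans h0)
      simp only [Nat.succ_eq_add_one] at this
      omega
    interval_cases p <;> try (exfalso; revert hp; norm_num; done)
    · exact (aux 3 (by decide)).trans (by norm_num)
    · exact (aux 2 (by decide)).trans (by norm_num)
    · exact (aux 1 (by decide)).trans (by norm_num)
    · exact (aux 1 (by decide)).trans (by norm_num)
  have hall : ∀ m ∈ Nat.divisors 2520, 19 ≤ m → 7 ≤ Nat.totient m := by decide +kernel
  exact absurd (hall n (Nat.mem_divisors.2 ⟨hd, by norm_num⟩) hn) (by omega)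

lemma main_sum (h : Nat.card {H : Subgroup G // IsCyclic H} = Nat.card G - 5) :
    ∑ d ∈ range 19, (Nat.totient d - 1) * cc G d = 5 ∧ ∀ d, 19 ≤ d → cc G d = 0 := by
  classical
  set M := Fintype.card G + 20 with hMdef
  have h1 := sum_NN (G := G) M (by omega)
  have h2 := sum_cc (G := G) M (by omega)
  have c0 : cc G 0 = 0 := by
    unfold cc
    rw [Nat.card_eq_zero]
    left
    constructor
    rintro ⟨H, _, hH⟩
    exact Nat.card_pos.ne' hH
  have hpos : 0 < Nat.card {H : Subgroup G // IsCyclic H} :=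
    Nat.card_pos_iff.2 ⟨⟨⟨⊥, inferInstance⟩⟩, inferInstance⟩
  have h3 : ∑ d ∈ range M, (Nat.totient d - 1) * cc G d + ∑ d ∈ range M, cc G d
      = ∑ d ∈ range M, NN G d := by
    rw [← Finset.sum_add_distrib]
    apply Finset.sum_congr rfl
    intro d _
    rw [NN_eq]
    rcases Nat.eq_zero_or_pos d with rfl | hd
    · simp [c0]
    · have := Nat.totient_pos.2 hd
      obtain ⟨k, hk⟩ : ∃ k, Nat.totient d = k + 1 := ⟨_, (Nat.succ_pred_eq_of_pos this).symm⟩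
      rw [hk]; simp; ring
  rw [h1, h2] at h3
  rw [Nat.card_eq_fintype_card (α := G)] at h
  have h5 : ∑ d ∈ range M, (Nat.totient d - 1) * cc G d = 5 := by omega
  have hbig : ∀ d, 19 ≤ d → cc G d = 0 := by
    intro d hd
    by_contra hne
    by_cases hdM : d < M
    · have := Finset.single_le_sum (f := fun d => (Nat.totient d - 1) * cc G d)
        (fun i _ => Nat.zero_le _) (Finset.mem_range.2 hdM)
      have ht := totient_big d hd
      have : 6 * 1 ≤ (Nat.totient d - 1) * cc G d :=
        Nat.mul_le_mul (by omega) (by omega)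
      omega
    · have := Finset.single_le_sum (f := fun d => cc G d)
        (fun i _ => Nat.zero_le _) (Finset.mem_range.2 (Nat.lt_succ_self d))
      have h6 := sum_cc (G := G) (d + 1) (by omega)
      rw [← Nat.succ_eq_add_one] at h6
      have h7 : ∑ d ∈ range M, cc G d + cc G d ≤ ∑ d ∈ range (d+1), cc G d := by
        rw [Finset.sum_range_succ _ d]
        refine Nat.add_le_add_right (Finset.sum_le_sum_of_subset ?_) _
        intro e
        simp only [Finset.mem_range]
        omega
      rw [Nat.succ_eq_add_one] at h6
      omega
  refine ⟨?_, hbig⟩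
  rw [← h5]
  apply Finset.sum_subset
  · intro d; simp only [Finset.mem_range]; omega
  · intro d _ hd
    rw [hbig d (by simpa using hd), mul_zero]

end
end CycSub
namespace CycSub
open Finset

section
variable {G : Type*} [Group G] [Fintype G]

lemma NN_pos {d : ℕ} {g : G} (h : orderOf g = d) : 0 < NN G d :=
  Finset.card_pos.2 ⟨g, by simp [h]⟩

lemma exists_of_NN_pos {d : ℕ} (h : 0 < NN G d) : ∃ g : G, orderOf g = d := by
  obtain ⟨g, hg⟩ := Finset.card_pos.1 h
  exact ⟨g, by simpa using hg⟩

lemma cc_pos {d : ℕ} {g : G} (h : orderOf g = d) : 0 < cc G d := by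
  have := NN_pos h
  rw [NN_eq] at this
  exact Nat.pos_of_mul_pos_left this

lemma exists_of_cc_pos {d : ℕ} (hd : 0 < d) (h : 0 < cc G d) : ∃ g : G, orderOf g = d := by
  apply exists_of_NN_pos
  rw [NN_eq]
  exact Nat.mul_pos (Nat.totient_pos.2 hd) h

lemma cc_pos_of_dvd {n d : ℕ} (hn : 0 < n) (hd : d ∣ n) (h : 0 < cc G n) : 0 < cc G d := by
  obtain ⟨g, hg⟩ := exists_of_cc_pos hn h
  obtain ⟨k, rfl⟩ := hd
  have hk : k ≠ 0 := by rintro rfl; simp at hn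
  refine cc_pos (g := g ^ k) ?_
  rw [orderOf_pow_of_dvd hk (by rw [hg]; exact Dvd.intro_left d rfl), hg,
    Nat.mul_div_cancel _ (Nat.pos_of_ne_zero hk)]

lemma uniq {d : ℕ} (h : cc G d = 1) {a b : G} (ha : orderOf a = d) (hb : orderOf b = d) :
    Subgroup.zpowers a = Subgroup.zpowers b := by
  unfold cc at h
  rw [Nat.card_eq_one_iff_unique] at h
  have := h.1
  have := Subsingleton.elim
    (⟨Subgroup.zpowers a, inferInstance, by rw [Nat.card_zpowers, ha]⟩ :
      {H : Subgroup G // IsCyclic H ∧ Nat.card H = d})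
    ⟨Subgroup.zpowers b, inferInstance, by rw [Nat.card_zpowers, hb]⟩
  simpa using this

lemma pair {d : ℕ} (hd : 3 ≤ d) (h : NN G d = 2) {a b : G} (ha : orderOf a = d)
    (hb : orderOf b = d) : b = a ∨ b = a⁻¹ := by
  classical
  have hne : a ≠ a⁻¹ := by
    intro e
    have h2 : a ^ 2 = 1 := by
      rw [pow_two]; nth_rewrite 2 [e]; simp
    have := Nat.le_of_dvd (by norm_num) (orderOf_dvd_of_pow_eq_one h2)
    omega
  have hs : ({a, a⁻¹} : Finset G) ⊆ univ.filter (fun g : G => orderOf g = d) := by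
    intro g
    simp only [Finset.mem_insert, Finset.mem_singleton, Finset.mem_filter, Finset.mem_univ,
      true_and]
    rintro (rfl | rfl) <;> simp [ha]
  have := Finset.eq_of_subset_of_card_le hs (by
    rw [Finset.card_pair hne]; exact h.le)
  have hb' : b ∈ univ.filter (fun g : G => orderOf g = d) := by simp [hb]
  rw [← this] at hb'
  simpa using hb'

/-- counting fixed points of conjugation by an element of order `p` -/
lemma conj_modEq (p : ℕ) [hp : Fact p.Prime] {x : G} (hx : x ^ p = 1) (P : G → Prop)
    (hP : ∀ g, P g → P (x * g * x⁻¹)) :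
    Nat.card {g // P g} ≡ Nat.card {g // P g ∧ Commute x g} [MOD p] := by
  classical
  let f : Function.End {g // P g} := fun g => ⟨x * g.1 * x⁻¹, hP _ g.2⟩
  have hf : ∀ (n : ℕ) (g : {g // P g}), ((f ^ n) g).1 = x ^ n * g.1 * (x ^ n)⁻¹ := by
    intro n
    induction n with
    | zero => intro g; simp [Function.End.one_def]
    | succ n ih =>
      intro g
      rw [pow_succ]
      change ((f ^ n) (f g)).1 = _
      rw [ih]
      change x ^ n * (x * g.1 * x⁻¹) * (x ^ n)⁻¹ = _
      rw [pow_succ]; group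
  have h1 : f ^ p ^ 1 = 1 := by
    funext g
    apply Subtype.ext
    rw [hf, pow_one, hx]
    change 1 * g.1 * 1⁻¹ = g.1
    simp
  have := Equiv.Perm.card_fixedPoints_modEq h1
  rw [← Nat.card_eq_fintype_card, ← Nat.card_eq_fintype_card] at this
  refine this.trans (congrArg (· % p) ?_)
  refine Nat.card_congr ⟨fun g => ⟨g.1.1, g.1.2, ?_⟩, fun g => ⟨⟨g.1, g.2.1⟩, ?_⟩, ?_, ?_⟩
  · have := congrArg Subtype.val g.2
    simp only [f] at this
    exact mul_inv_eq_iff_eq_mul.1 this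
  · apply Subtype.ext
    exact mul_inv_eq_iff_eq_mul.2 g.2.2
  · intro g; rfl
  · intro g; rfl

lemma NN_card (d : ℕ) : NN G d = Nat.card {g : G // orderOf g = d} := by
  unfold NN
  rw [← Fintype.card_subtype, ← Nat.card_eq_fintype_card]

lemma comm_dvd (p d : ℕ) [hp : Fact p.Prime] (hpd : Nat.Coprime p d) (h0 : cc G (p * d) = 0)
    {x : G} (hx : orderOf x = p) : p ∣ NN G d := by
  have h1 := conj_modEq p (x := x) (by rw [← hx]; exact pow_orderOf_eq_one x)
    (fun g => orderOf g = d) (fun g hg => by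
      rw [← hg]; exact (SemiconjBy.conj_mk x g |>.orderOf_eq).symm)
  have h2 : Nat.card {g : G // orderOf g = d ∧ Commute x g} = 0 := by
    rw [Nat.card_eq_zero]
    left
    constructor
    rintro ⟨g, hg, hc⟩
    have := hc.orderOf_mul_eq_mul_orderOf_of_coprime (by rw [hx, hg]; exact hpd)
    rw [hx, hg] at this
    have := cc_pos this
    omega
  rw [h2, ← NN_card] at h1
  exact (Nat.modEq_zero_iff_dvd).1 h1

lemma dvd_of_closed (y : G) : ∀ (n : ℕ) (A : Finset G), A.card = n →
    (∀ a ∈ A, a * y ∈ A) → orderOf y ∣ A.card := by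
  classical
  intro n
  induction n using Nat.strong_induction_on with
  | _ n ih =>
    intro A hA hcl
    rcases A.eq_empty_or_nonempty with rfl | ⟨a, ha⟩
    · simp
    set B := (range (orderOf y)).image (fun k => a * y ^ k) with hB
    have hBc : B.card = orderOf y := by
      rw [hB, Finset.card_image_of_injOn, Finset.card_range]
      intro i hi j hj hij
      exact pow_injOn_Iio_orderOf (by simpa using hi) (by simpa using hj) (mul_left_cancel hij)
    have hpow : ∀ k : ℕ, ∀ b ∈ A, b * y ^ k ∈ A := by
      intro k
      induction k with
      | zero => intro b hb; simpa using hb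
      | succ k ih2 => intro b hb; rw [pow_succ, ← mul_assoc]; exact hcl _ (ih2 b hb)
    have hBA : B ⊆ A := by
      intro b hb
      simp only [hB, Finset.mem_image] at hb
      obtain ⟨k, _, rfl⟩ := hb
      exact hpow k a ha
    have hBmem : ∀ b, b ∈ B ↔ a⁻¹ * b ∈ Subgroup.zpowers y := by
      intro b
      rw [mem_zpowers_iff_mem_range_orderOf]
      simp only [hB, Finset.mem_image]
      constructor
      · rintro ⟨k, hk, rfl⟩; exact ⟨k, hk, by group⟩
      · rintro ⟨k, hk, h⟩; exact ⟨k, hk, by rw [h]; group⟩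
    have hlt : (A \ B).card < n := by
      rw [Finset.card_sdiff_of_subset hBA, hBc, hA]
      have := orderOf_pos y
      have : 0 < A.card := Finset.card_pos.2 ⟨a, ha⟩
      omega
    have h1 := ih _ hlt (A \ B) rfl (by
      intro b hb
      rw [Finset.mem_sdiff] at hb ⊢
      refine ⟨hcl b hb.1, fun h => hb.2 ?_⟩
      rw [hBmem] at h ⊢
      have := mul_mem h (inv_mem (Subgroup.mem_zpowers y))
      simpa [mul_assoc] using this)
    have h2 := Finset.card_sdiff_add_card_eq_card hBA
    rw [← h2, hBc]
    exact Dvd.dvd.add h1 dvd_rfl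

/-- Frobenius-type congruence -/
lemma frob (p : ℕ) [hp : Fact p.Prime] {x : G} (hx : orderOf x = p) :
    p ∣ Nat.card {g : G // g ^ p = 1} := by
  classical
  have hxp : x ^ p = 1 := by rw [← hx]; exact pow_orderOf_eq_one x
  have h1 := conj_modEq p hxp (fun g => g ^ p = 1) (fun g hg => by rw [conj_pow, hg]; simp)
  rw [h1.dvd_iff dvd_rfl, Nat.card_eq_fintype_card, Fintype.card_subtype]
  have h2 := dvd_of_closed x _ (univ.filter (fun g : G => g ^ p = 1 ∧ Commute x g)) rfl (by
    intro a ha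
    simp only [Finset.mem_filter, Finset.mem_univ, true_and] at ha ⊢
    refine ⟨?_, ha.2.mul_right (Commute.refl x)⟩
    rw [ha.2.symm.mul_pow, ha.1, hxp, one_mul])
  rwa [hx] at h2

end
end CycSub
namespace CycSub
open Finset

lemma count_cyc (G : Type*) [Group G] [Fintype G] [DecidableEq G] (n : ℕ) (hn : 0 < n)
    (h : ∀ g : G, g ^ n = 1) :
    Nat.card {H : Subgroup G // IsCyclic H} =
      (univ.image (fun g : G => (range n).image (fun k => g ^ k))).card := by
  classical
  have hz : ∀ g : G, (((range n).image (fun k => g ^ k) : Finset G) : Set G) =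
      (Subgroup.zpowers g : Set G) := by
    intro g
    ext x
    simp only [coe_image, coe_range, Set.mem_image, Set.mem_Iio, SetLike.mem_coe]
    constructor
    · rintro ⟨k, _, rfl⟩; exact Subgroup.npow_mem_zpowers g k
    · intro hx
      rw [mem_zpowers_iff_mem_range_orderOf] at hx
      simp only [Finset.mem_image, Finset.mem_range] at hx
      obtain ⟨k, hk, rfl⟩ := hx
      exact ⟨k, hk.trans_le (Nat.le_of_dvd hn (orderOf_dvd_of_pow_eq_one (h g))), rfl⟩
  rw [Nat.card_eq_fintype_card, ← Finset.card_univ]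
  refine Finset.card_bij (fun H _ => univ.filter (fun g => g ∈ H.1)) ?_ ?_ ?_
  · rintro ⟨H, hH⟩ -
    obtain ⟨g, rfl⟩ := (Subgroup.isCyclic_iff_exists_zpowers_eq_top H).1 hH
    simp only [Finset.mem_image, Finset.mem_univ, true_and]
    refine ⟨g, ?_⟩
    apply Finset.coe_injective
    rw [hz]; ext; simp
  · rintro ⟨H, hH⟩ - ⟨K, hK⟩ - heq
    simp only [Subtype.mk.injEq]
    ext g
    have := Finset.ext_iff.1 heq g
    simpa using this
  · intro S hS
    simp only [Finset.mem_image, Finset.mem_univ, true_and] at hS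
    obtain ⟨g, rfl⟩ := hS
    refine ⟨⟨Subgroup.zpowers g, inferInstance⟩, Finset.mem_univ _, ?_⟩
    apply Finset.coe_injective
    rw [hz]; ext; simp

lemma card_cyc_congr {G H : Type*} [Group G] [Group H] (e : G ≃* H) :
    Nat.card {K : Subgroup G // IsCyclic K} = Nat.card {K : Subgroup H // IsCyclic K} := by
  refine Nat.card_congr (Equiv.subtypeEquiv e.mapSubgroup.toEquiv ?_)
  intro K
  exact (e.subgroupMap K).isCyclic

lemma count_C7 : Nat.card {H : Subgroup (Multiplicative (ZMod 7)) // IsCyclic H} = 2 := by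
  rw [count_cyc _ 7 (by norm_num) (by decide +kernel)]
  decide +kernel

lemma count_D7 : Nat.card {H : Subgroup (DihedralGroup 7) // IsCyclic H} = 9 := by
  rw [count_cyc _ 14 (by norm_num) (by decide +kernel)]
  decide +kernel

lemma count_Q3 : Nat.card {H : Subgroup (QuaternionGroup 3) // IsCyclic H} = 7 := by
  rw [count_cyc _ 12 (by norm_num) (by decide +kernel)]
  decide +kernel

lemma pow_val_add {G : Type*} [Group G] {n : ℕ} [NeZero n] (u : G) (hu : u ^ n = 1)
    (i j : ZMod n) : u ^ (i + j).val = u ^ i.val * u ^ j.val := by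
  rw [ZMod.val_add, ← pow_add]
  conv_rhs => rw [← Nat.mod_add_div (i.val + j.val) n]
  rw [pow_add, pow_mul, hu, one_pow, mul_one]

lemma pow_val_sub {G : Type*} [Group G] {n : ℕ} [NeZero n] (u : G) (hu : u ^ n = 1)
    (i j : ZMod n) : u ^ (i - j).val = u ^ i.val * (u ^ j.val)⁻¹ := by
  rw [eq_mul_inv_iff_mul_eq, ← pow_val_add u hu, sub_add_cancel]

lemma inv_rel {G : Type*} [Group G] {u y : G} (h : y * u * y⁻¹ = u⁻¹) (k : ℕ) :
    u ^ k * y = y * (u ^ k)⁻¹ := by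
  have h1 : y * (u ^ k) * y⁻¹ = (u ^ k)⁻¹ := by
    rw [← conj_pow, h, inv_pow]
  have h2 : y * (u ^ k)⁻¹ * y⁻¹ = u ^ k := by
    rw [← conj_inv, h1, inv_inv]
  calc u ^ k * y = (y * (u ^ k)⁻¹ * y⁻¹) * y := by rw [h2]
    _ = _ := by group

lemma iso_dihedral {G : Type*} [Group G] (n : ℕ) [NeZero n] (u y : G) (hu : orderOf u = n)
    (hy : y ^ 2 = 1) (hr : y * u * y⁻¹ = u⁻¹) (hn : y ∉ Subgroup.zpowers u)
    (hs : ∀ g, g ∈ Subgroup.zpowers u ∨ y⁻¹ * g ∈ Subgroup.zpowers u) :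
    Nonempty (G ≃* DihedralGroup n) := by
  have hun : u ^ n = 1 := by rw [← hu]; exact pow_orderOf_eq_one u
  have hpow : ∀ g ∈ Subgroup.zpowers u, ∃ i : ZMod n, u ^ i.val = g := by
    rintro g ⟨k, rfl⟩
    refine ⟨(k : ZMod n), ?_⟩
    simp only
    rw [← zpow_natCast, ZMod.val_intCast, ← hu, zpow_mod_orderOf]
  let f : DihedralGroup n →* G := MonoidHom.mk'
    (fun d => match d with
      | .r i => u ^ i.val
      | .sr i => y * u ^ i.val) (by
    rintro (i | i) (j | j)
    · simp only [DihedralGroup.r_mul_r]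
      exact pow_val_add u hun i j
    · simp only [DihedralGroup.r_mul_sr]
      rw [pow_val_sub u hun, ← mul_assoc (u ^ i.val), inv_rel hr, mul_assoc]
      congr 1
      rw [← inv_pow]
      exact ((Commute.refl u).inv_right.pow_pow _ _).eq
    · simp only [DihedralGroup.sr_mul_r]
      rw [pow_val_add u hun, mul_assoc]
    · simp only [DihedralGroup.sr_mul_sr]
      rw [pow_val_sub u hun, mul_assoc, ← mul_assoc _ y, inv_rel hr, ← mul_assoc, ← mul_assoc,
        ← pow_two, hy, one_mul, ← inv_pow]
      exact ((Commute.refl u).inv_right.pow_pow _ _).eq)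
  refine ⟨(MulEquiv.ofBijective f ⟨?_, ?_⟩).symm⟩
  · rw [injective_iff_map_eq_one]
    rintro (i | i) h
    · change u ^ i.val = 1 at h
      have := Nat.eq_zero_of_dvd_of_lt (orderOf_dvd_of_pow_eq_one h)
        (lt_of_lt_of_eq (ZMod.val_lt i) hu.symm)
      rw [ZMod.val_eq_zero] at this
      rw [this]; rfl
    · change y * u ^ i.val = 1 at h
      exact absurd (by rw [eq_inv_of_mul_eq_one_left h]
                       exact inv_mem (Subgroup.npow_mem_zpowers u _)) hn
  · intro g
    rcases hs g with h | h
    · obtain ⟨i, hi⟩ := hpow g h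
      exact ⟨.r i, hi⟩
    · obtain ⟨i, hi⟩ := hpow _ h
      refine ⟨.sr i, ?_⟩
      change y * u ^ i.val = g
      rw [hi]; group

lemma iso_quaternion {G : Type*} [Group G] (u y : G) (hu : orderOf u = 6)
    (hy : y ^ 2 = u ^ 3) (hr : y * u * y⁻¹ = u⁻¹) (hn : y ∉ Subgroup.zpowers u)
    (hs : ∀ g, g ∈ Subgroup.zpowers u ∨ y⁻¹ * g ∈ Subgroup.zpowers u) :
    Nonempty (G ≃* QuaternionGroup 3) := by
  have hun : u ^ 6 = 1 := by rw [← hu]; exact pow_orderOf_eq_one u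
  have hpow : ∀ g ∈ Subgroup.zpowers u, ∃ i : ZMod (2 * 3), u ^ i.val = g := by
    rintro g ⟨k, rfl⟩
    refine ⟨(k : ZMod (2 * 3)), ?_⟩
    simp only
    rw [← zpow_natCast, ZMod.val_intCast, show ((2 * 3 : ℕ) : ℤ) = ((orderOf u : ℕ) : ℤ) by
      rw [hu], zpow_mod_orderOf]
  let f : QuaternionGroup 3 →* G := MonoidHom.mk'
    (fun d => match d with
      | .a i => u ^ i.val
      | .xa i => y * u ^ i.val) (by
    rintro (i | i) (j | j)
    · simp only [QuaternionGroup.a_mul_a]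
      exact pow_val_add u hun i j
    · simp only [QuaternionGroup.a_mul_xa]
      rw [pow_val_sub u hun, ← mul_assoc (u ^ i.val), inv_rel hr, mul_assoc]
      congr 1
      rw [← inv_pow]
      exact ((Commute.refl u).inv_right.pow_pow _ _).eq
    · simp only [QuaternionGroup.xa_mul_a]
      rw [pow_val_add u hun, mul_assoc]
    · simp only [QuaternionGroup.xa_mul_xa]
      rw [pow_val_sub u hun, pow_val_add u hun, mul_assoc y, ← mul_assoc _ y, inv_rel hr,
        ← mul_assoc, ← mul_assoc, ← pow_two, hy,
        show ((3 : ℕ) : ZMod (2 * 3)).val = 3 from rfl, mul_assoc, mul_assoc]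
      congr 1
      rw [← inv_pow]
      exact ((Commute.refl u).inv_right.pow_pow _ _).eq)
  refine ⟨(MulEquiv.ofBijective f ⟨?_, ?_⟩).symm⟩
  · rw [injective_iff_map_eq_one]
    rintro (i | i) h
    · change u ^ i.val = 1 at h
      have := Nat.eq_zero_of_dvd_of_lt (orderOf_dvd_of_pow_eq_one h)
        (lt_of_lt_of_eq (ZMod.val_lt i) hu.symm)
      rw [ZMod.val_eq_zero] at this
      rw [this]; rfl
    · change y * u ^ i.val = 1 at h
      exact absurd (by rw [eq_inv_of_mul_eq_one_left h]
                       exact inv_mem (Subgroup.npow_mem_zpowers u _)) hn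
  · intro g
    rcases hs g with h | h
    · obtain ⟨i, hi⟩ := hpow g h
      exact ⟨.a i, hi⟩
    · obtain ⟨i, hi⟩ := hpow _ h
      refine ⟨.xa i, ?_⟩
      change y * u ^ i.val = g
      rw [hi]; group

end CycSub
namespace CycSub
open Finset

section
variable {G : Type*} [Group G] [Fintype G]

lemma orderOf_conj (x g : G) : orderOf (x * g * x⁻¹) = orderOf g :=
  ((SemiconjBy.conj_mk x g).orderOf_eq).symm

/-- number of elements of prime order -/
lemma frob_NN (p : ℕ) [hp : Fact p.Prime] (h : 0 < NN G p) : p ∣ NN G p + 1 := by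
  classical
  obtain ⟨x, hx⟩ := exists_of_NN_pos h
  have h1 := frob p hx
  rw [Nat.card_eq_fintype_card, Fintype.card_subtype] at h1
  have : univ.filter (fun g : G => g ^ p = 1) =
      insert 1 (univ.filter (fun g : G => orderOf g = p)) := by
    ext g
    simp only [Finset.mem_filter, Finset.mem_univ, true_and, Finset.mem_insert]
    constructor
    · intro hg
      by_cases h1 : g = 1
      · exact Or.inl h1
      · exact Or.inr (orderOf_eq_prime hg h1)
    · rintro (rfl | rfl)
      · simp
      · exact pow_orderOf_eq_one g
  rw [this, Finset.card_insert_of_notMem] at h1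
  · exact h1
  · simp only [Finset.mem_filter, Finset.mem_univ, true_and, orderOf_one]
    exact hp.out.one_lt.ne

lemma case7 (h7 : cc G 7 = 1) (h0 : ∀ d, 3 ≤ d → d ≠ 7 → cc G d = 0) :
    Nonempty (G ≃* Multiplicative (ZMod 7)) ∨ Nonempty (G ≃* DihedralGroup 7) := by
  classical
  obtain ⟨x, hx⟩ := exists_of_cc_pos (by norm_num) (h7 ▸ Nat.one_pos)
  have ho : ∀ g : G, g ∈ Subgroup.zpowers x ∨ g * g = 1 := by
    intro g
    have hp := orderOf_pos g
    by_cases h3 : 3 ≤ orderOf g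
    · by_cases hg : orderOf g = 7
      · left; rw [uniq h7 hx hg]; exact Subgroup.mem_zpowers g
      · exact absurd (cc_pos (g := g) rfl) (by rw [h0 _ h3 hg]; simp)
    · right
      rw [← pow_two]
      apply orderOf_dvd_iff_pow_eq_one.1
      interval_cases (orderOf g) <;> norm_num
  have hx2 : x * x ≠ 1 := by
    intro h
    have := orderOf_dvd_of_pow_eq_one (by rw [pow_two]; exact h : x ^ 2 = 1)
    rw [hx] at this
    revert this; norm_num
  by_cases hall : ∀ g, g ∈ Subgroup.zpowers x
  · left
    have hcyc : IsCyclic G := ⟨x, hall⟩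
    have hc : Nat.card G = 7 := by
      rw [← hx, ← Nat.card_zpowers, (Subgroup.eq_top_iff' _).2 hall]
      exact Subgroup.card_top.symm
    have := zmodCyclicMulEquiv hcyc
    rw [hc] at this
    exact ⟨this.symm⟩
  · right
    push Not at hall
    obtain ⟨t, ht⟩ := hall
    have hxm := Subgroup.mem_zpowers x
    have inv : ∀ s, s ∉ Subgroup.zpowers x → s * s = 1 ∧ s * x * s⁻¹ = x⁻¹ := by
      intro s hs
      have h1 := (ho s).resolve_left hs
      have h2 : s * x ∉ Subgroup.zpowers x := by
        rwa [Subgroup.mul_mem_cancel_right _ hxm]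
      have h3 := (ho _).resolve_left h2
      refine ⟨h1, ?_⟩
      have h4 : s⁻¹ = s := inv_eq_of_mul_eq_one_right h1
      rw [h4]
      apply eq_inv_of_mul_eq_one_left
      rw [← h3]; group
    obtain ⟨ht2, hti⟩ := inv t ht
    refine iso_dihedral 7 x t hx (by rw [pow_two]; exact ht2) hti ht ?_
    intro s
    by_contra! hcon
    obtain ⟨hs, hts⟩ := hcon
    have h1 := (inv s hs).2
    have h2 := (inv _ hts).2
    have h3 : t⁻¹ * x * t = x⁻¹ := by
      have h4 : t⁻¹ = t := inv_eq_of_mul_eq_one_right ht2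
      rw [h4] at hti ⊢; exact hti
    apply hx2
    have h5 : t⁻¹ * s * x * (t⁻¹ * s)⁻¹ = x := by
      calc t⁻¹ * s * x * (t⁻¹ * s)⁻¹ = t⁻¹ * (s * x * s⁻¹) * t := by group
        _ = (t⁻¹ * x * t)⁻¹ := by rw [h1]; group
        _ = x := by rw [h3, inv_inv]
    rw [h5] at h2
    nth_rewrite 2 [h2]; simp

lemma case8 (h8 : cc G 8 = 1) (h4 : cc G 4 = 2) : False := by
  classical
  obtain ⟨x, hx⟩ := exists_of_cc_pos (by norm_num) (h8 ▸ Nat.one_pos)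
  have N4 : NN G 4 = 4 := by rw [NN_eq, h4]; decide
  have hx8 : x ^ 8 = 1 := by rw [← hx]; exact pow_orderOf_eq_one x
  have hx4 : x ^ 4 ≠ 1 := by
    intro h
    have := orderOf_dvd_of_pow_eq_one h
    rw [hx] at this
    revert this; norm_num
  have hx2 : orderOf (x ^ 2) = 4 := by
    rw [orderOf_pow_of_dvd (by norm_num) (by rw [hx]; norm_num), hx]
  -- elements of order four inside ⟨x⟩
  have hin : ∀ y : G, orderOf y = 4 → y ∈ Subgroup.zpowers x → y = x ^ 2 ∨ y = (x ^ 2)⁻¹ := by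
    intro y hy hyx
    rw [mem_zpowers_iff_mem_range_orderOf, hx] at hyx
    simp only [Finset.mem_image, Finset.mem_range] at hyx
    obtain ⟨k, hk, rfl⟩ := hyx
    have hk2 : k ≠ 0 → 8 / Nat.gcd 8 k = 4 := by
      intro h; rw [← hy, orderOf_pow, hx]
    interval_cases k <;> simp at hk2 hy ⊢
    · right
      apply eq_inv_of_mul_eq_one_left
      rw [← pow_add]; exact hx8
  have hS : ∃ y : G, orderOf y = 4 ∧ y ∉ Subgroup.zpowers x := by
    by_contra! hcon
    have : univ.filter (fun g : G => orderOf g = 4) ⊆ {x ^ 2, (x ^ 2)⁻¹} := by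
      intro y hy
      simp only [Finset.mem_filter, Finset.mem_univ, true_and] at hy
      simpa using hin y hy (hcon y hy)
    have h1 := Finset.card_le_card this
    have h2 := Finset.card_le_two (a := x ^ 2) (b := (x ^ 2)⁻¹)
    unfold NN at N4
    omega
  obtain ⟨y, hy, hyx⟩ := hS
  have hy4 : y ^ 4 = 1 := by rw [← hy]; exact pow_orderOf_eq_one y
  have inv_ne : ∀ z : G, orderOf z = 4 → z ≠ z⁻¹ := by
    intro z hz e
    have h2 : z ^ 2 = 1 := by
      rw [pow_two]; nth_rewrite 2 [e]; simp
    have := Nat.le_of_dvd (by norm_num) (orderOf_dvd_of_pow_eq_one h2)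
    omega
  have hxm := Subgroup.mem_zpowers x
  have m2 : x ^ 2 ∈ Subgroup.zpowers x := pow_mem hxm 2
  have hsub : ({x ^ 2, (x ^ 2)⁻¹, y, y⁻¹} : Finset G) ⊆
      univ.filter (fun g : G => orderOf g = 4) := by
    intro g
    simp only [Finset.mem_insert, Finset.mem_singleton, Finset.mem_filter, Finset.mem_univ,
      true_and]
    rintro (rfl | rfl | rfl | rfl) <;> simp [hx2, hy]
  have hcard : ({x ^ 2, (x ^ 2)⁻¹, y, y⁻¹} : Finset G).card = 4 := by
    rw [Finset.card_insert_of_notMem, Finset.card_insert_of_notMem, Finset.card_pair (inv_ne y hy)]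
    · simp only [Finset.mem_insert, Finset.mem_singleton, not_or]
      refine ⟨fun h => hyx (h ▸ inv_mem m2), fun h => hyx ?_⟩
      rw [inv_injective h.symm]; exact m2
    · simp only [Finset.mem_insert, Finset.mem_singleton, not_or]
      refine ⟨inv_ne _ hx2, fun h => hyx (h ▸ m2), fun h => hyx ?_⟩
      rw [← inv_inv y, ← h]; exact inv_mem m2
  have heq := Finset.eq_of_subset_of_card_le hsub (by rw [hcard]; exact N4.le)
  have hc : x * y * x⁻¹ = y ∨ x * y * x⁻¹ = y⁻¹ := by
    have : x * y * x⁻¹ ∈ univ.filter (fun g : G => orderOf g = 4) := by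
      simp [orderOf_conj, hy]
    rw [← heq] at this
    simp only [Finset.mem_insert, Finset.mem_singleton] at this
    have hnot : x * y * x⁻¹ ∉ Subgroup.zpowers x := by
      rw [Subgroup.mul_mem_cancel_right _ (inv_mem hxm), Subgroup.mul_mem_cancel_left _ hxm]
      exact hyx
    rcases this with h | h | h | h
    · exact absurd (h ▸ m2) hnot
    · exact absurd (h ▸ inv_mem m2) hnot
    · exact Or.inl h
    · exact Or.inr h
  have hxy : (x * y) ^ 4 = x ^ 4 := by
    rcases hc with h | h
    · have hcom : Commute x y := mul_inv_eq_iff_eq_mul.1 h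
      rw [hcom.mul_pow, hy4, mul_one]
    · have h1 : x * y = y⁻¹ * x := mul_inv_eq_iff_eq_mul.1 h
      have h2 : x * y⁻¹ = y * x := by
        rw [mul_inv_eq_iff_eq_mul, mul_assoc, h1]; group
      have h3 : (x * y) ^ 2 = x ^ 2 := by
        calc (x * y) ^ 2 = (x * y) * (x * y) := pow_two _
          _ = (y⁻¹ * x) * (x * y) := by rw [h1]
          _ = y⁻¹ * x * (y⁻¹ * x) := by rw [h1]
          _ = y⁻¹ * (x * y⁻¹) * x := by group
          _ = x * x := by rw [h2]; group
          _ = x ^ 2 := (pow_two x).symm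
      rw [show (4 : ℕ) = 2 * 2 from rfl, pow_mul, h3, ← pow_mul]
  have ho : orderOf (x * y) = 8 := by
    have := orderOf_eq_prime_pow (x := x * y) (p := 2) (n := 2) (by
      norm_num; rw [hxy]; exact hx4) (by
      norm_num; rw [show (8 : ℕ) = 4 * 2 from rfl, pow_mul, hxy, ← pow_mul]; exact hx8)
    simpa using this
  have := uniq h8 hx ho
  apply hyx
  rw [← Subgroup.mul_mem_cancel_left _ hxm, this]
  exact Subgroup.mem_zpowers _

/-- `c₆ = 1` forces few elements of order three -/
lemma case6 (h6 : NN G 6 = 2) : NN G 3 ≤ 2 := by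
  classical
  obtain ⟨u, hu⟩ := exists_of_NN_pos (G := G) (d := 6) (by omega)
  have hu6 : u ^ 6 = 1 := by rw [← hu]; exact pow_orderOf_eq_one u
  have hu3 : orderOf (u ^ 3) = 2 := by
    rw [orderOf_pow_of_dvd (by norm_num) (by rw [hu]; norm_num), hu]
  have hcen : ∀ g, Commute (u ^ 3) g := by
    intro g
    have h1 : g * u ^ 3 * g⁻¹ = u ^ 3 := by
      rw [← conj_pow]
      rcases pair (by norm_num) h6 hu (b := g * u * g⁻¹) (by rw [orderOf_conj, hu]) with h | h
      · rw [h]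
      · rw [h, inv_pow]
        apply inv_eq_of_mul_eq_one_right
        rw [← pow_add]; exact hu6
    exact (mul_inv_eq_iff_eq_mul.1 h1).symm
  rw [← h6]
  unfold NN
  apply Finset.card_le_card_of_injOn (fun q => u ^ 3 * q)
  · intro q hq
    simp only [Finset.coe_filter, Finset.mem_univ, true_and, Set.mem_ofPred_eq] at hq ⊢
    rw [(hcen q).orderOf_mul_eq_mul_orderOf_of_coprime (by rw [hu3, hq]; norm_num), hu3, hq]
  · intro a _ b _ h
    exact mul_left_cancel h

/-- the number of cyclic subgroups of order six is odd -/
lemma case36 (h3 : NN G 3 = 2) (h6 : NN G 6 = 8) : False := by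
  classical
  obtain ⟨x, hx⟩ := exists_of_NN_pos (G := G) (d := 3) (by omega)
  have hx3 : x ^ 3 = 1 := by rw [← hx]; exact pow_orderOf_eq_one x
  have hxne : x ≠ x⁻¹ := by
    intro e
    have h2 : x ^ 2 = 1 := by
      rw [pow_two]; nth_rewrite 2 [e]; simp
    have := Nat.le_of_dvd (by norm_num) (orderOf_dvd_of_pow_eq_one h2)
    omega
  have g4 : ∀ g : G, orderOf g = 6 → (g ^ 4 = x ∨ g ^ 4 = x⁻¹) := by
    intro g hg
    apply pair (by norm_num) h3 hx
    rw [orderOf_pow, hg]; norm_num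
  have gc : ∀ g : G, orderOf g = 6 → Commute g x := by
    intro g hg
    rcases g4 g hg with h | h
    · rw [← h]; exact (Commute.refl g).pow_right 4
    · rw [← inv_inv x, ← h]; exact ((Commute.refl g).pow_right 4).inv_right
  set C := Subgroup.centralizer {x} with hC
  have memC : ∀ g : G, g ∈ C ↔ Commute g x := fun g => by
    rw [hC, Subgroup.mem_centralizer_singleton_iff]; exact Iff.rfl
  have heven : 2 ∣ NN C 2 + 1 := by
    apply frob_NN
    obtain ⟨g, hg⟩ := exists_of_NN_pos (G := G) (d := 6) (by omega)
    refine NN_pos (g := (⟨g ^ 3, (memC _).2 ((gc g hg).pow_left 3)⟩ : C)) ?_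
    rw [Subgroup.orderOf_mk, orderOf_pow, hg]; norm_num
  have hcount : NN G 6 = NN C 2 * 2 := by
    have hp := Finset.card_pair hxne
    suffices hh : (univ.filter (fun g : G => orderOf g = 6)).card =
        ((univ.filter (fun g : C => orderOf g = 2)) ×ˢ ({x, x⁻¹} : Finset G)).card by
      rw [Finset.card_product, hp] at hh
      exact hh
    symm
    have ord6 : ∀ a : C × G, a ∈ (univ.filter (fun g : C => orderOf g = 2)) ×ˢ {x, x⁻¹} →
        orderOf a.1 = 2 ∧ orderOf a.2 = 3 ∧ Commute a.1.1 a.2 := by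
      rintro ⟨s, z⟩ h
      simp only [Finset.mem_product, Finset.mem_filter, Finset.mem_univ, true_and,
        Finset.mem_insert, Finset.mem_singleton] at h
      obtain ⟨hs, hz⟩ := h
      have := (memC _).1 s.2
      rcases hz with rfl | rfl
      · exact ⟨hs, hx, this⟩
      · exact ⟨hs, by rw [orderOf_inv, hx], this.inv_right⟩
    refine Finset.card_bij (fun a _ => a.1.1 * a.2) ?_ ?_ ?_
    · intro a ha
      obtain ⟨h1, h2, h3⟩ := ord6 a ha
      simp only [Finset.mem_filter, Finset.mem_univ, true_and]
      rw [← Subgroup.orderOf_coe] at h1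
      rw [h3.orderOf_mul_eq_mul_orderOf_of_coprime (by rw [h1, h2]; norm_num), h1, h2]
    · intro a ha b hb hab
      have key : ∀ a : C × G, a ∈ (univ.filter (fun g : C => orderOf g = 2)) ×ˢ {x, x⁻¹} →
          (a.1.1 * a.2) ^ 4 = a.2 := by
        intro a ha
        obtain ⟨h1, h2, h3⟩ := ord6 a ha
        rw [← Subgroup.orderOf_coe] at h1
        have e1 : a.1.1 ^ 2 = 1 := by rw [← h1]; exact pow_orderOf_eq_one _
        have e2 : a.2 ^ 3 = 1 := by rw [← h2]; exact pow_orderOf_eq_one _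
        rw [h3.mul_pow, show (4 : ℕ) = 2 * 2 from rfl, pow_mul, e1, one_pow, one_mul,
          show 2 * 2 = 3 + 1 from rfl, pow_succ, e2, one_mul]
      have e : a.2 = b.2 := by rw [← key a ha, ← key b hb, hab]
      simp only [e] at hab
      exact Prod.ext (Subtype.ext (mul_right_cancel hab)) e
    · intro g hg
      simp only [Finset.mem_filter, Finset.mem_univ, true_and] at hg
      refine ⟨(⟨g ^ 3, (memC _).2 ((gc g hg).pow_left 3)⟩, g ^ 4), ?_, ?_⟩
      · simp only [Finset.mem_product, Finset.mem_filter, Finset.mem_univ, true_and,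
          Finset.mem_insert, Finset.mem_singleton]
        refine ⟨?_, g4 g hg⟩
        rw [Subgroup.orderOf_mk, orderOf_pow, hg]; norm_num
      · have : g ^ 6 = 1 := by rw [← hg]; exact pow_orderOf_eq_one g
        simp only
        rw [← pow_add, show 3 + 4 = 6 + 1 from rfl, pow_succ, this, one_mul]
  omega

lemma caseQ (h3 : NN G 3 = 2) (h6 : NN G 6 = 2) (h4 : 0 < NN G 4)
    (ho : ∀ g : G, orderOf g ∈ ({1, 2, 3, 4, 6} : Finset ℕ)) :
    Nonempty (G ≃* QuaternionGroup 3) := by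
  classical
  obtain ⟨u, hu⟩ := exists_of_NN_pos (G := G) (d := 6) (by omega)
  obtain ⟨y, hy⟩ := exists_of_NN_pos (G := G) h4
  have hum := Subgroup.mem_zpowers u
  have hx : orderOf (u ^ 2) = 3 := by
    rw [orderOf_pow_of_dvd (by norm_num) (by rw [hu]; norm_num), hu]
  have hxm : u ^ 2 ∈ Subgroup.zpowers u := pow_mem hum 2
  have h6m : ∀ g : G, orderOf g = 6 → g ∈ Subgroup.zpowers u := by
    intro g hg
    rcases pair (by norm_num) h6 hu hg with rfl | rfl
    · exact hum
    · exact inv_mem hum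
  have n12 : ∀ g : G, orderOf g ≠ 12 := by
    intro g hg
    have := ho g
    rw [hg] at this
    revert this; decide
  have hC : ∀ g : G, Commute g (u ^ 2) → g ∈ Subgroup.zpowers u := by
    intro g hg
    have h := ho g
    simp only [Finset.mem_insert, Finset.mem_singleton] at h
    rcases h with h | h | h | h | h
    · rw [orderOf_eq_one_iff.1 h]; exact one_mem _
    · rw [← Subgroup.mul_mem_cancel_right _ hxm]
      apply h6m
      rw [hg.orderOf_mul_eq_mul_orderOf_of_coprime (by rw [h, hx]; norm_num), h, hx]
    · rcases pair (by norm_num) h3 hx h with rfl | rfl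
      · exact hxm
      · exact inv_mem hxm
    · exfalso
      apply n12 (g * u ^ 2)
      rw [hg.orderOf_mul_eq_mul_orderOf_of_coprime (by rw [h, hx]; norm_num), h, hx]
    · exact h6m g h
  have hyn : ¬ Commute y (u ^ 2) := by
    intro hc
    apply n12 (y * u ^ 2)
    rw [hc.orderOf_mul_eq_mul_orderOf_of_coprime (by rw [hy, hx]; norm_num), hy, hx]
  have hinv : ∀ g : G, ¬ Commute g (u ^ 2) → g * u ^ 2 * g⁻¹ = (u ^ 2)⁻¹ := by
    intro g hg
    rcases pair (by norm_num) h3 hx (b := g * u ^ 2 * g⁻¹) (by rw [orderOf_conj, hx]) with h | h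
    · exact absurd (mul_inv_eq_iff_eq_mul.1 h) hg
    · exact h
  have hyz : y ∉ Subgroup.zpowers u := by
    rintro ⟨k, rfl⟩
    exact hyn (((Commute.refl u).zpow_left k).pow_right 2)
  have hyu : y * u * y⁻¹ = u⁻¹ := by
    rcases pair (by norm_num) h6 hu (b := y * u * y⁻¹) (by rw [orderOf_conj, hu]) with h | h
    · have : Commute y u := mul_inv_eq_iff_eq_mul.1 h
      exact absurd (this.pow_right 2) hyn
    · exact h
  have hy2o : orderOf (y ^ 2) = 2 := by
    rw [orderOf_pow_of_dvd (by norm_num) (by rw [hy]; norm_num), hy]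
  have hu6 : u ^ 6 = 1 := by rw [← hu]; exact pow_orderOf_eq_one u
  have hy2 : y ^ 2 = u ^ 3 := by
    have hc : Commute (y ^ 2) (u ^ 2) := by
      have h1 := hinv y hyn
      have h2 : y ^ 2 * u ^ 2 * (y ^ 2)⁻¹ = u ^ 2 := by
        calc y ^ 2 * u ^ 2 * (y ^ 2)⁻¹ = y * (y * u ^ 2 * y⁻¹) * y⁻¹ := by
              simp only [pow_two]; group
          _ = (y * u ^ 2 * y⁻¹)⁻¹ := by rw [h1, ← conj_inv, h1]
          _ = u ^ 2 := by rw [h1, inv_inv]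
      exact mul_inv_eq_iff_eq_mul.1 h2
    have h6' : orderOf (y ^ 2 * u ^ 2) = 6 := by
      rw [hc.orderOf_mul_eq_mul_orderOf_of_coprime (by rw [hy2o, hx]; norm_num), hy2o, hx]
    rcases pair (by norm_num) h6 hu h6' with h | h
    · have : y ^ 2 = u⁻¹ := by
        rw [eq_mul_inv_of_mul_eq h]; group
      rw [this, orderOf_inv, hu] at hy2o
      omega
    · rw [eq_mul_inv_of_mul_eq h]
      have : u⁻¹ * (u ^ 2)⁻¹ = (u ^ 3)⁻¹ := by group
      rw [this]
      apply inv_eq_of_mul_eq_one_right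
      rw [← pow_add]; exact hu6
  refine iso_quaternion u y hu hy2 hyu hyz ?_
  intro g
  by_cases hg : Commute g (u ^ 2)
  · exact Or.inl (hC g hg)
  · right
    apply hC
    have h1 := hinv g hg
    have h2 := hinv y hyn
    have h3 : y⁻¹ * (u ^ 2)⁻¹ * y = u ^ 2 := by
      rw [← h2]; group
    apply mul_inv_eq_iff_eq_mul.1
    calc y⁻¹ * g * u ^ 2 * (y⁻¹ * g)⁻¹ = y⁻¹ * (g * u ^ 2 * g⁻¹) * y := by group
      _ = u ^ 2 := by rw [h1, h3]

end
end CycSub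
namespace CycSub
open Finset

section
variable {G : Type*} [Group G] [Fintype G]

lemma sq_count {C : Type*} [Group C] [Fintype C] [DecidableEq C] (y : C) (hy : orderOf y = 4)
    (hc : ∀ g : C, Commute g y) (h4 : ∀ g : C, g ^ 4 = 1) (hcard : 4 < Fintype.card C) :
    4 ∣ (univ.filter (fun c : C => c ^ 2 = y ^ 2)).card := by
  have hy2 : y ^ 2 ≠ 1 := by
    intro h
    have := Nat.le_of_dvd (by norm_num) (orderOf_dvd_of_pow_eq_one h)
    omega
  have hy4 := h4 y
  have hyy : y ^ 2 * y ^ 2 = 1 := by rw [← pow_add]; exact hy4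
  let Y := Subgroup.zpowers y
  have hYn : Y.Normal := by
    constructor
    rintro n ⟨k, rfl⟩ g
    have : Commute g (y ^ k) := (hc g).zpow_right k
    simp only
    rw [this.eq, mul_inv_cancel_right]
    exact Subgroup.zpow_mem_zpowers y k
  have hYc : Nat.card Y = 4 := by rw [Nat.card_zpowers, hy]
  let Q := C ⧸ Y
  have : Fintype Q := Fintype.ofFinite _
  have hq4 : ∀ q : Q, q ^ 4 = 1 := by
    intro q
    induction q using QuotientGroup.induction_on with
    | H g => rw [← QuotientGroup.mk_pow, h4]; rfl
  have hQ : 1 < Nat.card Q := by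
    have := Subgroup.card_eq_card_quotient_mul_card_subgroup Y
    rw [hYc, Nat.card_eq_fintype_card] at this
    change _ = Nat.card Q * 4 at this
    omega
  have hex : ∃ q : Q, orderOf q = 2 := by
    have := (Finite.one_lt_card_iff_nontrivial).1 hQ
    obtain ⟨q, hq⟩ := exists_ne (1 : Q)
    by_cases h2 : q ^ 2 = 1
    · exact ⟨q, orderOf_eq_prime h2 hq⟩
    · exact ⟨q ^ 2, orderOf_eq_prime (by rw [← pow_mul]; exact hq4 q) h2⟩
  obtain ⟨q, hq⟩ := hex
  have hf := frob 2 hq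
  have hT := Nat.card_congr (QuotientGroup.preimageMkEquivSubgroupProdSet Y {q : Q | q ^ 2 = 1})
  rw [Nat.card_prod, hYc] at hT
  have hmem : ∀ c : C, (c : Q) ^ 2 = 1 ↔ c ^ 2 = 1 ∨ c ^ 2 = y ^ 2 := by
    intro c
    rw [← QuotientGroup.mk_pow, QuotientGroup.eq_one_iff]
    constructor
    · intro h
      change c ^ 2 ∈ Subgroup.zpowers y at h
      rw [mem_zpowers_iff_mem_range_orderOf, hy] at h
      simp only [Finset.mem_image, Finset.mem_range] at h
      obtain ⟨k, hk, h⟩ := h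
      have h1 : (y ^ k) ^ 2 = 1 := by rw [h, ← pow_mul]; exact h4 c
      rw [← pow_mul] at h1
      have := orderOf_dvd_of_pow_eq_one h1
      rw [hy] at this
      interval_cases k
      · left; rw [← h, pow_zero]
      · omega
      · right; exact h.symm
      · omega
    · rintro (h | h)
      · rw [h]; exact one_mem _
      · rw [h]; exact pow_mem (Subgroup.mem_zpowers y) 2
  have hT2 : Nat.card ((QuotientGroup.mk : C → Q) ⁻¹' {q : Q | q ^ 2 = 1}) =
      (univ.filter (fun c : C => c ^ 2 = 1)).card + (univ.filter (fun c : C => c ^ 2 = y ^ 2)).card := by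
    rw [← Finset.card_union_of_disjoint, ← Finset.filter_or, ← Fintype.card_subtype,
      ← Nat.card_eq_fintype_card]
    · exact Nat.card_congr (Equiv.subtypeEquivRight hmem)
    · rw [Finset.disjoint_filter]
      intro c _ h1 h2
      exact hy2 (h2.symm.trans h1)
  have heq : (univ.filter (fun c : C => c ^ 2 = 1)).card =
      (univ.filter (fun c : C => c ^ 2 = y ^ 2)).card := by
    refine Finset.card_bij (fun c _ => c * y) ?_ ?_ ?_
    · intro c hcm
      simp only [Finset.mem_filter, Finset.mem_univ, true_and] at hcm ⊢
      rw [(hc c).mul_pow, hcm, one_mul]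
    · intro a _ b _ h
      exact mul_right_cancel h
    · intro c hcm
      simp only [Finset.mem_filter, Finset.mem_univ, true_and] at hcm
      refine ⟨c * y⁻¹, ?_, by simp⟩
      simp only [Finset.mem_filter, Finset.mem_univ, true_and]
      rw [(hc c).inv_right.mul_pow, hcm, inv_pow, mul_inv_cancel]
  rw [hT2] at hT
  obtain ⟨m, hm⟩ := hf
  have hm' : Nat.card ({q : Q | q ^ 2 = 1} : Set Q) = 2 * m := hm
  rw [hm', heq] at hT
  omega

lemma normal_four (h5 : cc G 4 = 5) (h4 : ∀ g : G, g ^ 4 = 1) :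
    ∃ y : G, orderOf y = 4 ∧ ∀ g : G, g * y * g⁻¹ = y ∨ g * y * g⁻¹ = y⁻¹ := by
  classical
  let X := {H : Subgroup G // IsCyclic H ∧ Nat.card H = 4}
  letI act : MulAction G X :=
    { smul := fun g H => ⟨H.1.map (MulAut.conj g).toMonoidHom, by
        have := H.2.1
        have e := H.1.equivMapOfInjective (MulAut.conj g).toMonoidHom (MulAut.conj g).injective
        exact ⟨e.isCyclic.1 this, by rw [← Nat.card_congr e.toEquiv]; exact H.2.2⟩⟩
      one_smul := by
        rintro ⟨H, hH⟩
        apply Subtype.ext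
        change H.map (MulAut.conj (1 : G)).toMonoidHom = H
        rw [map_one]
        exact Subgroup.map_id H
      mul_smul := by
        rintro a b ⟨H, hH⟩
        apply Subtype.ext
        change H.map (MulAut.conj (a * b)).toMonoidHom =
          (H.map (MulAut.conj b).toMonoidHom).map (MulAut.conj a).toMonoidHom
        rw [map_mul, Subgroup.map_map]
        rfl }
  have hp : IsPGroup 2 G := fun g => ⟨2, h4 g⟩
  have : Fact (Nat.Prime 2) := ⟨Nat.prime_two⟩
  obtain ⟨⟨H, hH, hHc⟩, hfix⟩ := hp.nonempty_fixed_point_of_prime_not_dvd_card X (by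
    change ¬ 2 ∣ cc G 4
    rw [h5]; norm_num)
  obtain ⟨y, rfl⟩ := (Subgroup.isCyclic_iff_exists_zpowers_eq_top H).1 hH
  have hy : orderOf y = 4 := by rw [← Nat.card_zpowers, hHc]
  refine ⟨y, hy, fun g => ?_⟩
  have h1 := congrArg Subtype.val (hfix g)
  change (Subgroup.zpowers y).map (MulAut.conj g).toMonoidHom = Subgroup.zpowers y at h1
  have h2 : g * y * g⁻¹ ∈ Subgroup.zpowers y := by
    rw [← h1]
    exact ⟨y, Subgroup.mem_zpowers y, rfl⟩
  have h3 : orderOf (g * y * g⁻¹) = 4 := by rw [orderOf_conj, hy]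
  rw [mem_zpowers_iff_mem_range_orderOf, hy] at h2
  simp only [Finset.mem_image, Finset.mem_range] at h2
  obtain ⟨k, hk, h⟩ := h2
  rw [← h] at h3 ⊢
  interval_cases k
  · simp at h3
  · left; simp
  · rw [orderOf_pow, hy] at h3; norm_num at h3
  · right
    apply eq_inv_of_mul_eq_one_left
    rw [← pow_succ]; exact h4 y

lemma case4 (h5 : cc G 4 = 5) (h4 : ∀ g : G, g ^ 4 = 1) : False := by
  classical
  have hN : NN G 4 = 10 := by rw [NN_eq, h5]; decide
  obtain ⟨y, hy, hn⟩ := normal_four h5 h4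
  have hy2 : y ^ 2 ≠ 1 := by
    intro h
    have := Nat.le_of_dvd (by norm_num) (orderOf_dvd_of_pow_eq_one h)
    omega
  have hyy : y ^ 2 * y ^ 2 = 1 := by rw [← pow_add]; exact h4 y
  have hSmem : ∀ g : G, orderOf g = 4 ↔ g ^ 2 ≠ 1 := by
    intro g
    constructor
    · intro hg h
      have := Nat.le_of_dvd (by norm_num) (orderOf_dvd_of_pow_eq_one h)
      omega
    · intro hg
      have := orderOf_eq_prime_pow (x := g) (p := 2) (n := 1) (by simpa using hg)
        (by norm_num; exact h4 g)
      simpa using this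
  have hinv : ∀ g : G, ¬ Commute g y → g * y * g⁻¹ = y⁻¹ := by
    intro g hg
    exact (hn g).resolve_left (fun h => hg (mul_inv_eq_iff_eq_mul.1 h))
  set C := Subgroup.centralizer {y} with hC
  have memC : ∀ g : G, g ∈ C ↔ Commute g y := fun g => by
    rw [hC, Subgroup.mem_centralizer_singleton_iff]; exact Iff.rfl
  let S := univ.filter (fun g : G => orderOf g = 4)
  let S1 := univ.filter (fun g : G => Commute g y ∧ g ^ 2 = y ^ 2)
  have hS1 : S1 ⊆ S := by
    intro g hg
    simp only [S1, S, Finset.mem_filter, Finset.mem_univ, true_and] at hg ⊢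
    rw [hSmem, hg.2]; exact hy2
  have hcl : ∀ a ∈ S \ S1, a * y ∈ S \ S1 := by
    intro a ha
    simp only [S1, S, Finset.mem_sdiff, Finset.mem_filter, Finset.mem_univ, true_and, hSmem,
      not_and] at ha ⊢
    obtain ⟨h1, h2⟩ := ha
    by_cases hc : Commute a y
    · have h3 := h2 hc
      rw [hc.mul_pow]
      refine ⟨fun h => h3 ?_, fun _ h => h1 ?_⟩
      · exact mul_right_cancel (h.trans hyy.symm)
      · exact mul_eq_right.1 h
    · have h3 : a * y = y⁻¹ * a := mul_inv_eq_iff_eq_mul.1 (hinv a hc)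
      have h4 : y * (a * y) = a := by rw [h3]; group
      have h5 : (a * y) ^ 2 = a ^ 2 := by
        rw [pow_two, mul_assoc, h4, pow_two]
      rw [h5]
      refine ⟨h1, fun h => absurd ?_ hc⟩
      have := h.mul_left (Commute.refl y).inv_left
      simpa using this
  have hd := dvd_of_closed y _ (S \ S1) rfl hcl
  rw [hy] at hd
  have hsum := Finset.card_sdiff_add_card_eq_card hS1
  have hScard : S.card = 10 := hN
  have hSC : S1.card = (univ.filter (fun c : C => c ^ 2 = (⟨y, (memC y).2 (Commute.refl y)⟩ : C) ^ 2)).card := by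
    symm
    refine Finset.card_bij (fun c _ => c.1) ?_ ?_ ?_
    · intro c hc
      simp only [S1, Finset.mem_filter, Finset.mem_univ, true_and] at hc ⊢
      exact ⟨(memC _).1 c.2, congrArg Subtype.val hc⟩
    · intro a _ b _ h
      exact Subtype.ext h
    · intro g hg
      simp only [S1, Finset.mem_filter, Finset.mem_univ, true_and] at hg
      refine ⟨⟨g, (memC g).2 hg.1⟩, ?_, rfl⟩
      simp only [Finset.mem_filter, Finset.mem_univ, true_and]
      exact Subtype.ext hg.2
  have hcle : Fintype.card C ≤ 4 := by
    by_contra! hlt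
    have := sq_count (⟨y, (memC y).2 (Commute.refl y)⟩ : C) (by rw [Subgroup.orderOf_mk, hy])
      (fun g => Subtype.ext ((memC _).1 g.2)) (fun g => Subtype.ext (h4 g.1)) hlt
    rw [← hSC] at this
    omega
  have hA : (univ.filter (fun g : G => Commute g y)).card ≤ 4 := by
    rw [← Fintype.card_subtype, ← Nat.card_eq_fintype_card,
      ← Nat.card_congr (Equiv.subtypeEquivRight memC), Nat.card_eq_fintype_card]
    exact hcle
  have hB : (univ.filter (fun g : G => ¬ Commute g y)).card ≤ 4 := by
    by_cases hex : ∃ t : G, ¬ Commute t y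
    · obtain ⟨t, ht⟩ := hex
      refine le_trans ?_ hA
      apply Finset.card_le_card_of_injOn (fun g => t * g)
      · intro g hg
        simp only [Finset.coe_filter, Finset.mem_univ, true_and, Set.mem_ofPred_eq] at hg ⊢
        apply mul_inv_eq_iff_eq_mul.1
        calc t * g * y * (t * g)⁻¹ = t * (g * y * g⁻¹) * t⁻¹ := by group
          _ = (t * y * t⁻¹)⁻¹ := by rw [hinv g hg, conj_inv]
          _ = y := by rw [hinv t ht, inv_inv]
      · intro a _ b _ h
        exact mul_left_cancel h
    · push Not at hex
      rw [Finset.filter_false_of_mem]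
      · simp
      · intro g _; simpa using hex g
  have hAB := Finset.card_filter_add_card_filter_not (s := (univ : Finset G)) (fun g : G => Commute g y)
  have hSu : S.card ≤ (univ : Finset G).card := Finset.card_le_univ S
  omega

lemma forward (h : Nat.card {H : Subgroup G // IsCyclic H} = Nat.card G - 5) :
    Nonempty (G ≃* Multiplicative (ZMod 7)) ∨ Nonempty (G ≃* DihedralGroup 7) ∨
      Nonempty (G ≃* QuaternionGroup 3) := by
  classical
  obtain ⟨hs, hbig⟩ := main_sum h
  simp only [Finset.sum_range_succ, Finset.sum_range_zero,
    show Nat.totient 0 = 0 by decide, show Nat.totient 1 = 1 by decide,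
    show Nat.totient 2 = 1 by decide, show Nat.totient 3 = 2 by decide,
    show Nat.totient 4 = 2 by decide, show Nat.totient 5 = 4 by decide,
    show Nat.totient 6 = 2 by decide, show Nat.totient 7 = 6 by decide,
    show Nat.totient 8 = 4 by decide, show Nat.totient 9 = 6 by decide,
    show Nat.totient 10 = 4 by decide, show Nat.totient 11 = 10 by decide,
    show Nat.totient 12 = 4 by decide, show Nat.totient 13 = 12 by decide,
    show Nat.totient 14 = 6 by decide, show Nat.totient 15 = 8 by decide,
    show Nat.totient 16 = 8 by decide, show Nat.totient 17 = 16 by decide,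
    show Nat.totient 18 = 6 by decide] at hs
  norm_num at hs
  have dv : ∀ n d, 0 < n → d ∣ n → 0 < cc G n → 0 < cc G d := fun n d h1 h2 h3 =>
    cc_pos_of_dvd h1 h2 h3
  have d9 := dv 9 3 (by norm_num) (by norm_num)
  have d14 := dv 14 7 (by norm_num) (by norm_num)
  have d18 := dv 18 3 (by norm_num) (by norm_num)
  have d10 := dv 10 5 (by norm_num) (by norm_num)
  have d8 := dv 8 4 (by norm_num) (by norm_num)
  have d12 := dv 12 3 (by norm_num) (by norm_num)
  have d12a := dv 12 4 (by norm_num) (by norm_num)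
  have d12b := dv 12 6 (by norm_num) (by norm_num)
  have d6 := dv 6 3 (by norm_num) (by norm_num)
  have z0 : cc G 9 = 0 ∧ cc G 14 = 0 ∧ cc G 18 = 0 ∧ cc G 10 = 0 ∧ cc G 12 = 0 ∧ cc G 11 = 0 ∧
    cc G 13 = 0 ∧ cc G 15 = 0 ∧ cc G 16 = 0 ∧ cc G 17 = 0 := by omega
  obtain ⟨z9, z14, z18, z10, z12, z11, z13, z15, z16, z17⟩ := z0
  have hp3 : Fact (Nat.Prime 3) := ⟨Nat.prime_three⟩
  have hp5 : Fact (Nat.Prime 5) := ⟨Nat.prime_five⟩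
  have N3 : NN G 3 = 2 * cc G 3 := NN_eq 3
  have N4 : NN G 4 = 2 * cc G 4 := NN_eq 4
  have N6 : NN G 6 = 2 * cc G 6 := NN_eq 6
  have N8 : NN G 8 = 4 * cc G 8 := NN_eq 8
  by_cases h7 : 0 < cc G 7
  · have h71 : cc G 7 = 1 := by omega
    rcases case7 h71 (by
      intro d hd hd7
      by_cases hd19 : 19 ≤ d
      · exact hbig d hd19
      · have : d < 19 := by omega
        interval_cases d <;> omega) with h | h
    · exact Or.inl h
    · exact Or.inr (Or.inl h)
  have z7 : cc G 7 = 0 := by omega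
  by_cases h5 : 0 < cc G 5
  · exfalso
    obtain ⟨x, hx⟩ := exists_of_cc_pos (by norm_num) h5
    have a3 := comm_dvd 5 3 (by norm_num) z15 hx
    have a4 := comm_dvd 5 4 (by norm_num) (hbig 20 (by norm_num)) hx
    have a6 := comm_dvd 5 6 (by norm_num) (hbig 30 (by norm_num)) hx
    omega
  have z5 : cc G 5 = 0 := by omega
  by_cases h3 : 0 < cc G 3
  · obtain ⟨x, hx⟩ := exists_of_cc_pos (by norm_num) h3
    have f3 := frob_NN (G := G) 3 (by omega)
    have a4 := comm_dvd 3 4 (by norm_num) z12 hx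
    have a8 := comm_dvd 3 8 (by norm_num) (hbig 24 (by norm_num)) hx
    have z8 : cc G 8 = 0 := by omega
    have c6 := case6 (G := G)
    have c36 := case36 (G := G)
    right; right
    have e : cc G 3 = 1 ∧ cc G 6 = 1 ∧ cc G 4 = 3 := by
      by_cases hc3 : cc G 3 = 1
      · by_cases hc4 : cc G 4 = 0
        · exact (c36 (by omega) (by omega)).elim
        · omega
      · have : NN G 6 = 2 := by omega
        have := c6 this
        omega
    refine caseQ (by omega) (by omega) (by omega) ?_
    intro g
    have hg := cc_pos (g := g) rfl
    have hpos := orderOf_pos g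
    by_cases hd19 : 19 ≤ orderOf g
    · rw [hbig _ hd19] at hg; omega
    · have hlt : orderOf g < 19 := by omega
      generalize orderOf g = d at *
      interval_cases d <;> first | decide | omega
  · have z3 : cc G 3 = 0 := by omega
    have z6 : cc G 6 = 0 := by omega
    by_cases h8 : 0 < cc G 8
    · exact (case8 (G := G) (by omega) (by omega)).elim
    · refine (case4 (G := G) (by omega) ?_).elim
      intro g
      have hg := cc_pos (g := g) rfl
      have hpos := orderOf_pos g
      apply orderOf_dvd_iff_pow_eq_one.1
      by_cases hd19 : 19 ≤ orderOf g
      · rw [hbig _ hd19] at hg; omega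
      · have hlt : orderOf g < 19 := by omega
        generalize orderOf g = d at *
        interval_cases d <;> omega

end
end CycSub

/-- `QuaternionGroup 3` is the dicyclic group of order 12, which is the
nontrivial semidirect product `C_3 ⋊ C_4`. -/
theorem stmt_4 (G : Type*) [Group G] [Finite G] :
    Nat.card {H : Subgroup G // IsCyclic H} = Nat.card G - 5 ↔
      (Nonempty (G ≃* Multiplicative (ZMod 7)) ∨
       Nonempty (G ≃* DihedralGroup 7) ∨
       Nonempty (G ≃* QuaternionGroup 3)) := by
  constructor
  · intro h
    have : Fintype G := Fintype.ofFinite G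
    exact CycSub.forward h
  · rintro (⟨⟨e⟩⟩ | ⟨⟨e⟩⟩ | ⟨⟨e⟩⟩)
    · rw [CycSub.card_cyc_congr e, CycSub.count_C7, Nat.card_congr e.toEquiv]
      simp
    · rw [CycSub.card_cyc_congr e, CycSub.count_D7, Nat.card_congr e.toEquiv, DihedralGroup.nat_card]
    · rw [CycSub.card_cyc_congr e, CycSub.count_Q3, Nat.card_congr e.toEquiv,
        Nat.card_eq_fintype_card, QuaternionGroup.card]
end

section
/- If G is a finite 2-group with an odd number of cyclic subgroups of order 4, then G is cyclic, dihedral, generalized quaternion, or quasidihedral. -/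
/-- Relators for the semidihedral (quasidihedral) group of order `2^n`:
`⟨r, s | r^(2^(n-1)) = s^2 = 1, s*r*s = r^(2^(n-2) - 1)⟩`.
The generator `true` plays the role of `r` and `false` the role of `s`. -/
def semidihedralRels (n : ℕ) : Set (FreeGroup Bool) :=
  { FreeGroup.of true ^ 2 ^ (n - 1),
    FreeGroup.of false ^ 2,
    FreeGroup.of false * FreeGroup.of true * FreeGroup.of false *
      (FreeGroup.of true ^ (2 ^ (n - 2) - 1))⁻¹ }

/-- The semidihedral (quasidihedral) group of order `2^n`. -/
def SemidihedralGroup (n : ℕ) : Type := PresentedGroup (semidihedralRels n)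

instance (n : ℕ) : Group (SemidihedralGroup n) :=
  inferInstanceAs (Group (PresentedGroup (semidihedralRels n)))


theorem aux_iso {H G : Type*} [Group H] [Group G] (φ : H →* G) (r s : H) (a x : G)
    (hr : φ r = a) (hs : φ s = x) (hN : r ^ orderOf a = 1)
    (hH : ∀ h : H, ∃ i : ℤ, h = r ^ i ∨ h = s * r ^ i)
    (hx : x ∉ Subgroup.zpowers a)
    (hG : ∀ g : G, ∃ i : ℤ, g = a ^ i ∨ g = x * a ^ i) : Nonempty (G ≃* H) := by
  refine ⟨(MulEquiv.ofBijective φ ⟨?_, ?_⟩).symm⟩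
  · rw [injective_iff_map_eq_one]
    intro h hh
    obtain ⟨i, rfl | rfl⟩ := hH h
    · rw [map_zpow, hr] at hh
      have := orderOf_dvd_iff_zpow_eq_one.2 hh
      obtain ⟨k, rfl⟩ := this
      rw [zpow_mul, zpow_natCast, hN, one_zpow]
    · rw [map_mul, map_zpow, hr, hs] at hh
      exfalso
      apply hx
      rw [eq_inv_of_mul_eq_one_left hh]
      exact inv_mem (zpow_mem (Subgroup.mem_zpowers a) i)
  · intro g
    obtain ⟨i, rfl | rfl⟩ := hG g
    · exact ⟨r ^ i, by rw [map_zpow, hr]⟩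
    · exact ⟨s * r ^ i, by rw [map_mul, map_zpow, hr, hs]⟩

theorem aux_cast {G : Type*} [Group G] (a : G) (N : ℕ) (h : a ^ N = 1) (i : ℤ) :
    a ^ (((i : ZMod N)).cast : ℤ) = a ^ i := by
  rw [ZMod.coe_intCast]
  conv_rhs => rw [← Int.emod_add_mul_ediv i N, zpow_add, zpow_mul, zpow_natCast, h, one_zpow, mul_one]

/-- if `x * a = a ^ u * x` then the same for powers -/
theorem aux_conj {G : Type*} [Group G] (a x : G) (u : ℤ) (h : x * a * x⁻¹ = a ^ u) (i : ℤ) :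
    x * a ^ i * x⁻¹ = a ^ (u * i) := by
  rw [zpow_mul, ← h, conj_zpow]

theorem iso_dihedral {G : Type*} [Group G] (a x : G)
    (hx : x ∉ Subgroup.zpowers a) (h : x * a * x⁻¹ = a⁻¹) (hxx : x * x = 1)
    (hG : ∀ g : G, ∃ i : ℤ, g = a ^ i ∨ g = x * a ^ i) :
    Nonempty (G ≃* DihedralGroup (orderOf a)) := by
  have hN := pow_orderOf_eq_one a
  have hc : ∀ i : ℤ, a ^ i * x = x * a ^ (-i) := by
    intro i
    have := aux_conj a x (-1) (by rw [h, zpow_neg_one]) (-i)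
    rw [show (-1 : ℤ) * -i = i by ring] at this
    rw [← this]; group
  let f : DihedralGroup (orderOf a) → G := fun d => match d with
    | .r i => a ^ (i.cast : ℤ)
    | .sr i => x * a ^ (i.cast : ℤ)
  have hf : ∀ p q, f (p * q) = f p * f q := by
    rintro (i | i) (j | j) <;> obtain ⟨i, rfl⟩ := ZMod.intCast_surjective i <;>
      obtain ⟨j, rfl⟩ := ZMod.intCast_surjective j
    · simp only [DihedralGroup.r_mul_r, f, ← Int.cast_add, aux_cast a _ hN, zpow_add]
    · simp only [DihedralGroup.r_mul_sr, f, ← Int.cast_sub, aux_cast a _ hN]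
      rw [← mul_assoc, hc, mul_assoc, ← zpow_add]; congr 2; ring
    · simp only [DihedralGroup.sr_mul_r, f, ← Int.cast_add, aux_cast a _ hN, zpow_add, mul_assoc]
    · simp only [DihedralGroup.sr_mul_sr, f, ← Int.cast_sub, aux_cast a _ hN]
      rw [mul_assoc, ← mul_assoc _ x, hc, mul_assoc, ← mul_assoc, hxx, one_mul, ← zpow_add]
      congr 1; ring
  refine aux_iso (MonoidHom.mk' f hf) (.r 1) (.sr 0) a x ?_ ?_ ?_ ?_ hx hG
  · change a ^ (((1 : ZMod (orderOf a))).cast : ℤ) = a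
    rw [← Int.cast_one, aux_cast a _ hN, zpow_one]
  · change x * a ^ (((0 : ZMod (orderOf a))).cast : ℤ) = x
    rw [← Int.cast_zero, aux_cast a _ hN, zpow_zero, mul_one]
  · simp
  · rintro (i | i) <;> obtain ⟨i, rfl⟩ := ZMod.intCast_surjective i <;> refine ⟨i, ?_⟩
    · left; simp
    · right; simp

theorem iso_quaternion {G : Type*} [Group G] (a x : G) (M : ℕ) (hM : orderOf a = 2 * M)
    (hx : x ∉ Subgroup.zpowers a) (h : x * a * x⁻¹ = a⁻¹) (hxx : x * x = a ^ (M : ℤ))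
    (hG : ∀ g : G, ∃ i : ℤ, g = a ^ i ∨ g = x * a ^ i) :
    Nonempty (G ≃* QuaternionGroup M) := by
  have hN : a ^ (2 * M) = 1 := hM ▸ pow_orderOf_eq_one a
  have hc : ∀ i : ℤ, a ^ i * x = x * a ^ (-i) := by
    intro i
    have := aux_conj a x (-1) (by rw [h, zpow_neg_one]) (-i)
    rw [show (-1 : ℤ) * -i = i by ring] at this
    rw [← this]; group
  let f : QuaternionGroup M → G := fun d => match d with
    | .a i => a ^ (i.cast : ℤ)
    | .xa i => x * a ^ (i.cast : ℤ)
  have hf : ∀ p q, f (p * q) = f p * f q := by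
    rintro (i | i) (j | j) <;> obtain ⟨i, rfl⟩ := ZMod.intCast_surjective i <;>
      obtain ⟨j, rfl⟩ := ZMod.intCast_surjective j
    · simp only [QuaternionGroup.a_mul_a, f, ← Int.cast_add, aux_cast a _ hN, zpow_add]
    · simp only [QuaternionGroup.a_mul_xa, f, ← Int.cast_sub, aux_cast a _ hN]
      rw [← mul_assoc, hc, mul_assoc, ← zpow_add]; congr 2; ring
    · simp only [QuaternionGroup.xa_mul_a, f, ← Int.cast_add, aux_cast a _ hN, zpow_add, mul_assoc]
    · have e : ((M : ZMod (2 * M)) + (j : ZMod (2 * M)) - (i : ZMod (2 * M)))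
        = (((M : ℤ) + j - i : ℤ) : ZMod (2 * M)) := by push_cast; ring
      simp only [QuaternionGroup.xa_mul_xa, f, e, aux_cast a _ hN]
      rw [mul_assoc, ← mul_assoc _ x, hc, mul_assoc, ← mul_assoc, hxx, ← zpow_add, ← zpow_add]
      congr 1; ring
  refine aux_iso (MonoidHom.mk' f hf) (.a 1) (.xa 0) a x ?_ ?_ ?_ ?_ hx hG
  · change a ^ (((1 : ZMod (2 * M))).cast : ℤ) = a
    rw [← Int.cast_one, aux_cast a _ hN, zpow_one]
  · change x * a ^ (((0 : ZMod (2 * M))).cast : ℤ) = x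
    rw [← Int.cast_zero, aux_cast a _ hN, zpow_zero, mul_one]
  · simp [hM]
  · have hz : ∀ i : ℤ, (QuaternionGroup.a 1 : QuaternionGroup M) ^ i = .a i := by
      intro i
      obtain ⟨n, rfl | rfl⟩ := i.eq_nat_or_neg
      · simp
      · simp only [zpow_neg, zpow_natCast, QuaternionGroup.a_one_pow]; push_cast; rfl
    rintro (i | i) <;> obtain ⟨i, rfl⟩ := ZMod.intCast_surjective i <;> refine ⟨i, ?_⟩
    · left; rw [hz]
    · right; rw [hz]; simp

theorem iso_semidihedral {G : Type*} [Group G] (a x : G) (n : ℕ) (hM : orderOf a = 2 ^ (n - 1))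
    (hx : x ∉ Subgroup.zpowers a) (h : x * a * x⁻¹ = a ^ (2 ^ (n - 2) - 1)) (hxx : x * x = 1)
    (hG : ∀ g : G, ∃ i : ℤ, g = a ^ i ∨ g = x * a ^ i) :
    Nonempty (G ≃* SemidihedralGroup n) := by
  have hxi : x⁻¹ = x := inv_eq_of_mul_eq_one_left hxx
  have hrel : ∀ w ∈ semidihedralRels n, FreeGroup.lift (fun b : Bool => if b then a else x) w = 1 := by
    rintro w (rfl | rfl | rfl)
    · simp [← hM, pow_orderOf_eq_one]
    · simp [pow_two, hxx]
    · simp only [map_mul, map_inv, map_pow, FreeGroup.lift_apply_of]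
      simp only [if_true, Bool.false_eq_true, if_false]
      nth_rewrite 2 [← hxi]
      rw [h]; simp
  let φ : SemidihedralGroup n →* G := PresentedGroup.toGroup hrel
  let r : SemidihedralGroup n := PresentedGroup.of true
  let s : SemidihedralGroup n := PresentedGroup.of false
  have r1 : r ^ 2 ^ (n - 1) = 1 :=
    PresentedGroup.one_of_mem (rels := semidihedralRels n) (Or.inl rfl)
  have r2 : s ^ 2 = 1 :=
    PresentedGroup.one_of_mem (rels := semidihedralRels n) (Or.inr (Or.inl rfl))
  have r3 : s * r * s * (r ^ (2 ^ (n - 2) - 1))⁻¹ = 1 :=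
    PresentedGroup.one_of_mem (rels := semidihedralRels n) (Or.inr (Or.inr rfl))
  have hsi : s⁻¹ = s := inv_eq_of_mul_eq_one_left (by rw [← pow_two, r2])
  have r4 : s * r * s⁻¹ = r ^ ((2 ^ (n - 2) - 1 : ℕ) : ℤ) := by
    rw [hsi, zpow_natCast]; exact mul_inv_eq_one.1 r3
  have hc : ∀ i : ℤ, r ^ i * s = s * r ^ (((2 ^ (n - 2) - 1 : ℕ) : ℤ) * i) := by
    intro i
    rw [← aux_conj r s _ r4 i]
    rw [hsi, ← mul_assoc, ← mul_assoc, ← pow_two, r2, one_mul]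
  refine aux_iso φ r s a x ?_ ?_ ?_ ?_ hx hG
  · exact (PresentedGroup.toGroup.of hrel).trans (by simp)
  · exact (PresentedGroup.toGroup.of hrel).trans (by simp)
  · rw [hM]; exact r1
  · intro w
    have hw : w ∈ Subgroup.closure (Set.range (PresentedGroup.of (rels := semidihedralRels n))) := by
      rw [PresentedGroup.closure_range_of]; trivial
    refine Subgroup.closure_induction_right (G := SemidihedralGroup n)
      (p := fun w _ => ∃ i : ℤ, w = r ^ i ∨ w = s * r ^ i) ?_ ?_ ?_ hw
    · exact ⟨0, by simp⟩
    · have key : ∀ (p : SemidihedralGroup n) , (∃ i : ℤ, p = r ^ i ∨ p = s * r ^ i) →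
         ∃ i : ℤ, p * s = r ^ i ∨ p * s = s * r ^ i := by
        rintro p ⟨i, rfl | rfl⟩
        · exact ⟨_, Or.inr (hc i)⟩
        · exact ⟨_, Or.inl (by rw [mul_assoc, hc i, ← mul_assoc, ← pow_two, r2, one_mul])⟩
      rintro p hp _ ⟨b, rfl⟩ ih
      cases b
      · exact key p ih
      · obtain ⟨i, rfl | rfl⟩ := ih
        · exact ⟨i + 1, Or.inl (zpow_add_one r i).symm⟩
        · exact ⟨i + 1, Or.inr (by rw [zpow_add_one, ← mul_assoc])⟩
    · rintro p hp _ ⟨b, rfl⟩ ih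
      cases b
      · change ∃ i : ℤ, p * s⁻¹ = r ^ i ∨ p * s⁻¹ = s * r ^ i
        rw [hsi]
        obtain ⟨i, rfl | rfl⟩ := ih
        · exact ⟨_, Or.inr (hc i)⟩
        · exact ⟨_, Or.inl (by rw [mul_assoc, hc i, ← mul_assoc, ← pow_two, r2, one_mul])⟩
      · change ∃ i : ℤ, p * r⁻¹ = r ^ i ∨ p * r⁻¹ = s * r ^ i
        obtain ⟨i, rfl | rfl⟩ := ih
        · exact ⟨i - 1, Or.inl (zpow_sub_one r i).symm⟩
        · exact ⟨i - 1, Or.inr (by rw [zpow_sub_one, ← mul_assoc])⟩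

theorem exists_central {G : Type*} [Group G] [Finite G] (h2 : IsPGroup 2 G) (K : Subgroup G)
    [hK : K.Normal] (hne : K ≠ ⊥) : ∃ x ∈ K, x ≠ 1 ∧ x * x = 1 ∧ ∀ g : G, g * x = x * g := by
  have hKp : IsPGroup 2 K := h2.to_subgroup K
  have hc : 2 ∣ Nat.card K := by
    rcases hKp.card_eq_or_dvd with h | h
    · exact absurd (Subgroup.card_eq_one.1 h) hne
    · exact h
  have hp : IsPGroup 2 (ConjAct G) := h2.of_equiv ConjAct.toConjAct
  obtain ⟨b, hb, hb1⟩ := hp.exists_fixed_point_of_prime_dvd_card_of_fixed_point K hc (a := 1)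
    (by intro g; exact smul_one g)
  obtain ⟨b, hbK⟩ := b
  have hcomm : ∀ g : G, g * b = b * g := by
    intro g
    have := congrArg Subtype.val (hb (ConjAct.toConjAct g))
    have h3 : g * b * g⁻¹ = b := this
    exact mul_inv_eq_iff_eq_mul.1 h3
  have hb1 : b ≠ 1 := fun h => hb1 (Subtype.ext h.symm)
  obtain ⟨k, hk⟩ := IsPGroup.iff_orderOf.1 h2 b
  rcases k with _ | k
  · simp at hk; exact absurd hk hb1
  refine ⟨b ^ 2 ^ k, pow_mem hbK _, ?_, ?_, fun g => (Commute.pow_right (hcomm g) _)⟩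
  · intro h
    have := orderOf_dvd_of_pow_eq_one h
    rw [hk] at this
    have := Nat.le_of_dvd (by positivity) this
    rw [pow_succ] at this
    have : 0 < 2 ^ k := by positivity
    omega
  · rw [← pow_add, ← two_mul, ← pow_succ', ← hk, pow_orderOf_eq_one]

/-- Elementwise form of: there is a normal four-subgroup. -/
def NV (G : Type*) [Group G] : Prop :=
  ∃ y z : G, z ≠ 1 ∧ z * z = 1 ∧ (∀ g, g * z = z * g) ∧ y ≠ 1 ∧ y ≠ z ∧ y * y = 1 ∧
    ∀ g, g * y * g⁻¹ = y ∨ g * y * g⁻¹ = y * z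

theorem unique_inv {G : Type*} [Group G] (a b c : G)
    (hb : b ∈ Subgroup.zpowers a) (hc : c ∈ Subgroup.zpowers a) (hb1 : b ≠ 1) (hc1 : c ≠ 1)
    (hbb : b * b = 1) (hcc : c * c = 1) : b = c := by
  obtain ⟨i, rfl⟩ := hb
  obtain ⟨j, rfl⟩ := hc
  simp only at *
  rw [← zpow_add, ← orderOf_dvd_iff_zpow_eq_one] at hbb hcc
  rw [ne_eq, ← orderOf_dvd_iff_zpow_eq_one] at hb1 hc1
  have : (orderOf a : ℤ) ∣ i - j := by
    obtain ⟨p, hp⟩ := hbb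
    obtain ⟨q, hq⟩ := hcc
    have hp' : Odd p := by
      by_contra h
      obtain ⟨s, rfl⟩ := Int.not_odd_iff_even.1 h
      exact hb1 ⟨s, by linarith⟩
    have hq' : Odd q := by
      by_contra h
      obtain ⟨s, rfl⟩ := Int.not_odd_iff_even.1 h
      exact hc1 ⟨s, by linarith⟩
    obtain ⟨s, rfl⟩ := hp'
    obtain ⟨t, rfl⟩ := hq'
    exact ⟨s - t, by linarith⟩
  rw [← mul_inv_eq_one, ← zpow_neg, ← zpow_add, ← orderOf_dvd_iff_zpow_eq_one, ← sub_eq_add_neg]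
  exact this

theorem odd_coprime {G : Type*} [Group G] (h2 : IsPGroup 2 G) (a : G) (t : ℤ)
    (ht : Odd t) : IsCoprime (orderOf a : ℤ) t := by
  obtain ⟨n, hn⟩ := IsPGroup.iff_orderOf.1 h2 a
  rw [hn]; push_cast
  apply IsCoprime.pow_left
  obtain ⟨s, rfl⟩ := ht
  exact ⟨-s, 1, by ring⟩

theorem odd_cancel {G : Type*} [Group G] (h2 : IsPGroup 2 G) (a : G) (t i : ℤ)
    (ht : Odd t) (h : a ^ (i * t) = 1) : a ^ i = 1 := by
  rw [← orderOf_dvd_iff_zpow_eq_one] at *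
  exact (odd_coprime h2 a t ht).dvd_of_dvd_mul_right h

theorem odd_inv {G : Type*} [Group G] (h2 : IsPGroup 2 G) (a : G) (t : ℤ)
    (ht : Odd t) : ∃ s : ℤ, a ^ (t * s) = a := by
  obtain ⟨p, q, h⟩ := odd_coprime h2 a t ht
  refine ⟨q, ?_⟩
  rw [show t * q = 1 - p * orderOf a by linarith, zpow_sub, zpow_mul', zpow_natCast,
    pow_orderOf_eq_one]
  simp

theorem zpowers_normal {G : Type*} [Group G] (x : G) (h : ∀ g, g * x * g⁻¹ ∈ Subgroup.zpowers x) :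
    (Subgroup.zpowers x).Normal := by
  constructor
  rintro _ ⟨i, rfl⟩ g
  simp only
  rw [← conj_zpow]
  exact zpow_mem (h g) i

/-- elements acting as `1 mod 4` -/
def Ksub {G : Type*} [Group G] [Finite G] (a : G) : Subgroup G where
  carrier := {g | ∃ u : ℤ, g * a * g⁻¹ = a ^ (1 + 4 * u)}
  one_mem' := ⟨0, by simp⟩
  mul_mem' := by
    rintro g h ⟨u, hu⟩ ⟨v, hv⟩
    refine ⟨u + v + 4 * u * v, ?_⟩
    rw [show g * h * a * (g * h)⁻¹ = g * (h * a * h⁻¹) * g⁻¹ by group, hv, aux_conj a g _ hu]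
    congr 1; ring
  inv_mem' := by
    rintro g hg
    have key : ∀ n : ℕ, ∃ u : ℤ, g ^ n * a * (g ^ n)⁻¹ = a ^ (1 + 4 * u) := by
      intro n
      induction n with
      | zero => exact ⟨0, by simp⟩
      | succ n ih =>
        obtain ⟨u, hu⟩ := hg
        obtain ⟨v, hv⟩ := ih
        refine ⟨u + v + 4 * u * v, ?_⟩
        rw [pow_succ']
        rw [show g * g ^ n * a * (g * g ^ n)⁻¹ = g * (g ^ n * a * (g ^ n)⁻¹) * g⁻¹ by group, hv,
          aux_conj a g _ hu]
        congr 1; ring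
    have := key (orderOf g - 1)
    rwa [show g ^ (orderOf g - 1) = g⁻¹ from ?_] at this
    apply eq_inv_of_mul_eq_one_left
    rw [← pow_succ, Nat.sub_add_cancel (orderOf_pos g), pow_orderOf_eq_one]

theorem Ksub_le {G : Type*} [Group G] [Finite G] (h2 : IsPGroup 2 G) (hV : ¬ NV G) (a : G)
    (hA : (Subgroup.zpowers a).Normal)
    (hmax : ∀ x : G, (Subgroup.zpowers x).Normal → a ∈ Subgroup.zpowers x →
      x ∈ Subgroup.zpowers a) : Ksub a ≤ Subgroup.zpowers a := by
  by_contra hK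
  have hconj : ∀ g : G, ∃ v : ℤ, g * a * g⁻¹ = a ^ v := fun g => by
    obtain ⟨v, hv⟩ := hA.conj_mem a (Subgroup.mem_zpowers a) g
    exact ⟨v, hv.symm⟩
  have hKn : (Ksub a).Normal := by
    constructor
    rintro g ⟨u, hu⟩ h
    obtain ⟨v, hv⟩ := hconj h⁻¹
    refine ⟨u, ?_⟩
    rw [show h * g * h⁻¹ * a * (h * g * h⁻¹)⁻¹ = h * (g * (h⁻¹ * a * h⁻¹⁻¹) * g⁻¹) * h⁻¹ by group,
      hv, aux_conj a g _ hu, mul_comm, zpow_mul, ← hv, ← conj_zpow]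
    group
  have hne : (Ksub a).map (QuotientGroup.mk' (Subgroup.zpowers a)) ≠ ⊥ := by
    intro h
    apply hK
    rw [Subgroup.map_eq_bot_iff, QuotientGroup.ker_mk'] at h
    exact h
  have : ((Ksub a).map (QuotientGroup.mk' (Subgroup.zpowers a))).Normal :=
    hKn.map _ (QuotientGroup.mk'_surjective _)
  obtain ⟨q, ⟨x, ⟨u, hu⟩, rfl⟩, hq1, hqq, hqc⟩ :=
    exists_central (h2.to_quotient (Subgroup.zpowers a)) _ hne
  have hxA : x ∉ Subgroup.zpowers a := fun h => hq1 ((QuotientGroup.eq_one_iff x).2 h)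
  have hxx : x * x ∈ Subgroup.zpowers a := (QuotientGroup.eq_one_iff (x * x)).1 hqq
  have hxc : ∀ g : G, ∃ i : ℤ, g * x * g⁻¹ = x * a ^ i := by
    intro g
    have h := hqc g
    have h' : ((x * g : G) : G ⧸ Subgroup.zpowers a) = ((g * x : G) : G ⧸ Subgroup.zpowers a) := h.symm
    obtain ⟨i, hi⟩ := QuotientGroup.eq.1 h'
    obtain ⟨v, hv⟩ := hconj g
    refine ⟨v * i, ?_⟩
    rw [← aux_conj a g v hv, show a ^ i = (x * g)⁻¹ * (g * x) from hi]
    group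
  by_cases hax : a ∈ Subgroup.zpowers x
  · apply hxA
    refine hmax x (zpowers_normal x fun g => ?_) hax
    obtain ⟨i, hi⟩ := hxc g
    rw [hi]
    exact mul_mem (Subgroup.mem_zpowers x) (zpow_mem hax i)
  have hA1 : Subgroup.zpowers a ≠ ⊥ := by
    intro h
    rw [Subgroup.zpowers_eq_bot] at h
    exact hax (h ▸ one_mem _)
  obtain ⟨k, hk⟩ := hxx
  replace hk : a ^ k = x * x := hk
  rcases Int.even_or_odd k with ⟨l, rfl⟩ | hodd
  swap
  · apply hax
    obtain ⟨s, hs⟩ := odd_inv h2 a k hodd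
    rw [← hs, zpow_mul, hk]
    exact zpow_mem (mul_mem (Subgroup.mem_zpowers x) (Subgroup.mem_zpowers x)) s
  obtain ⟨z, hzA, hz1, hzz, hzc⟩ := exists_central h2 (Subgroup.zpowers a) hA1
  have hodd : Odd (1 + 2 * u) := ⟨u, by ring⟩
  obtain ⟨s, hs⟩ := odd_inv h2 a _ hodd
  obtain ⟨y, hy⟩ : ∃ y, y = x * a ^ (-l * s) := ⟨_, rfl⟩
  have hyA : y ∉ Subgroup.zpowers a := by
    intro h
    apply hxA
    rw [show x = y * (a ^ (-l * s))⁻¹ by rw [hy]; group]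
    exact mul_mem h (inv_mem (zpow_mem (Subgroup.mem_zpowers a) _))
  have hya : y * a * y⁻¹ = a ^ (1 + 4 * u) := by
    rw [← hu, hy]; group
  have hsq : ∀ (w : G), w * a * w⁻¹ = a ^ (1 + 4 * u) → ∀ k : ℤ, w * w = a ^ k → ∀ m : ℤ,
      (w * a ^ m) * (w * a ^ m) = a ^ (m * 2 * (1 + 2 * u) + k) := by
    intro w hw k hk m
    calc (w * a ^ m) * (w * a ^ m) = (w * a ^ m * w⁻¹) * (w * w) * a ^ m := by group
      _ = _ := by
        rw [aux_conj a w _ hw, hk, ← zpow_add, ← zpow_add]; congr 1; ring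
  have hyy : y * y = 1 := by
    rw [hy, hsq x hu (l + l) hk.symm, show -l * s * 2 * (1 + 2 * u) + (l + l) =
      ((1 + 2 * u) * s) * (-(l * 2)) + l * 2 by ring, zpow_add, zpow_mul, hs, ← zpow_add]
    simp
  refine hV ⟨y, z, hz1, hzz, hzc, ?_, ?_, hyy, ?_⟩
  · rintro rfl; exact hyA (one_mem _)
  · rintro rfl; exact hyA hzA
  intro g
  obtain ⟨m, hm⟩ : ∃ m : ℤ, g * y * g⁻¹ = y * a ^ m := by
    obtain ⟨i, hi⟩ := hxc g
    obtain ⟨v, hv⟩ := hconj g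
    refine ⟨l * s + i + v * (-l * s), ?_⟩
    rw [zpow_add, zpow_add, ← aux_conj a g v hv, hy]
    calc _ = (g * x * g⁻¹) * (g * a ^ (-l * s) * g⁻¹) := by group
      _ = _ := by rw [hi]; group
  have h1 : (y * a ^ m) * (y * a ^ m) = 1 := by
    rw [← hm]
    calc _ = g * (y * y) * g⁻¹ := by group
      _ = 1 := by rw [hyy]; group
  rw [hm]
  have h3 : a ^ (m * 2) = 1 := by
    rw [hsq y hya 0 (by rw [hyy, zpow_zero]), add_zero] at h1
    exact odd_cancel h2 a _ _ hodd h1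
  by_cases h4 : a ^ m = 1
  · left; rw [h4, mul_one]
  · right
    rw [unique_inv a (a ^ m) z (zpow_mem (Subgroup.mem_zpowers a) _) hzA h4 hz1 ?_ hzz]
    rw [← zpow_add, ← mul_two, h3]

theorem classify {G : Type*} [Group G] [Finite G] (h2 : IsPGroup 2 G) (hV : ¬ NV G) :
    IsCyclic G ∨
    (∃ m : ℕ, Nonempty (G ≃* DihedralGroup m)) ∨
    (∃ m : ℕ, Nonempty (G ≃* QuaternionGroup (2 ^ m))) ∨
    (∃ m : ℕ, Nonempty (G ≃* SemidihedralGroup m)) := by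
  have : Nonempty {a : G // (Subgroup.zpowers a).Normal} :=
    ⟨⟨1, by rw [Subgroup.zpowers_one_eq_bot]; infer_instance⟩⟩
  obtain ⟨⟨a, hA⟩, hmax'⟩ :=
    Finite.exists_max (fun a : {a : G // (Subgroup.zpowers a).Normal} => orderOf a.1)
  have hmax : ∀ x : G, (Subgroup.zpowers x).Normal → a ∈ Subgroup.zpowers x →
      x ∈ Subgroup.zpowers a := by
    intro x hx hax
    have h := hmax' ⟨x, hx⟩
    simp only at h
    have hle : Subgroup.zpowers a ≤ Subgroup.zpowers x := (Subgroup.zpowers_le).2 hax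
    have := Subgroup.eq_of_le_of_card_ge hle (by rw [Nat.card_zpowers, Nat.card_zpowers]; exact h)
    rw [this]; exact Subgroup.mem_zpowers x
  have hK := Ksub_le h2 hV a hA hmax
  by_cases hall : ∀ g, g ∈ Subgroup.zpowers a
  · exact Or.inl ⟨a, hall⟩
  right
  push Not at hall
  obtain ⟨x, hx⟩ := hall
  obtain ⟨n, hn⟩ := IsPGroup.iff_orderOf.1 h2 a
  have hact : ∀ g, g ∉ Subgroup.zpowers a → ∃ v : ℤ, g * a * g⁻¹ = a ^ (4 * v - 1) := by
    intro g hg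
    obtain ⟨v, hv⟩ := hA.conj_mem a (Subgroup.mem_zpowers a) g
    replace hv : a ^ v = g * a * g⁻¹ := hv
    have h1 : ¬ ∃ u, v = 1 + 4 * u := by
      rintro ⟨u, rfl⟩
      exact hg (hK ⟨u, hv.symm⟩)
    have h3 : ¬ ∃ w, v = 2 * w := by
      rintro ⟨w, rfl⟩
      rcases n with _ | n
      · rw [pow_zero, orderOf_eq_one_iff] at hn
        exact hg (hK ⟨0, by rw [hn]; simp⟩)
      · have h5 : a ^ (2 ^ n : ℕ) = 1 := by
          have : (a ^ (2 * w)) ^ (2 ^ n : ℕ) = 1 := by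
            rw [← zpow_natCast, ← zpow_mul, show 2 * w * ((2 ^ n : ℕ) : ℤ)
              = ((2 ^ (n + 1) : ℕ) : ℤ) * w by push_cast; ring, zpow_mul, ← hn, zpow_natCast,
              pow_orderOf_eq_one, one_zpow]
          rw [hv, conj_pow] at this
          exact conj_eq_one_iff.1 this
        have := Nat.le_of_dvd (by positivity) (orderOf_dvd_of_pow_eq_one h5)
        rw [hn, pow_succ] at this
        have : 0 < 2 ^ n := by positivity
        omega
    refine ⟨(v + 1) / 4, ?_⟩
    rw [← hv]; congr 1
    have a1 := h1
    have h4 : v % 4 ≠ 1 := fun h => h1 ⟨v / 4, by omega⟩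
    have h5 : v % 2 ≠ 0 := fun h => h3 ⟨v / 2, by omega⟩
    omega
  have hprod : ∀ g h, g ∉ Subgroup.zpowers a → h ∉ Subgroup.zpowers a →
      g * h ∈ Subgroup.zpowers a := by
    intro g h hg hh
    obtain ⟨v, hv⟩ := hact g hg
    obtain ⟨w, hw⟩ := hact h hh
    apply hK
    refine ⟨4 * v * w - v - w, ?_⟩
    rw [show g * h * a * (g * h)⁻¹ = g * (h * a * h⁻¹) * g⁻¹ by group, hw, aux_conj a g _ hv]
    congr 1; ring
  obtain ⟨v, hv⟩ := hact x hx
  obtain ⟨k, hk⟩ := hprod x x hx hx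
  replace hk : a ^ k = x * x := hk
  have hG : ∀ x, x ∉ Subgroup.zpowers a → ∀ g : G, ∃ i : ℤ, g = a ^ i ∨ g = x * a ^ i := by
    intro x hx g
    by_cases hg : g ∈ Subgroup.zpowers a
    · obtain ⟨i, hi⟩ := hg
      exact ⟨i, Or.inl hi.symm⟩
    · obtain ⟨i, hi⟩ := hprod x⁻¹ g (fun h => hx (by simpa using h)) hg
      refine ⟨i, Or.inr ?_⟩
      rw [show a ^ i = x⁻¹ * g from hi]; group
  rcases n with _ | n
  · exfalso
    rw [pow_zero, orderOf_eq_one_iff] at hn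
    exact hx (hK ⟨0, by rw [hn]; simp⟩)
  have hM1 : a ^ ((2 ^ n : ℕ) : ℤ) ≠ 1 := by
    rw [zpow_natCast]
    intro h5
    have := Nat.le_of_dvd (by positivity) (orderOf_dvd_of_pow_eq_one h5)
    rw [hn, pow_succ] at this
    have : 0 < 2 ^ n := by positivity
    omega
  have hMM : a ^ ((2 ^ n : ℕ) : ℤ) * a ^ ((2 ^ n : ℕ) : ℤ) = 1 := by
    rw [zpow_natCast, ← pow_add, ← two_mul, ← pow_succ', ← hn, pow_orderOf_eq_one]
  have hdich : ∀ i : ℤ, a ^ (i * 2) = 1 → a ^ i = 1 ∨ a ^ i = a ^ ((2 ^ n : ℕ) : ℤ) := by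
    intro i hi
    by_cases h4 : a ^ i = 1
    · exact Or.inl h4
    · right
      refine unique_inv a _ _ (zpow_mem (Subgroup.mem_zpowers a) _)
        (zpow_mem (Subgroup.mem_zpowers a) _) h4 hM1 ?_ hMM
      rw [← zpow_add, ← mul_two, hi]
  have hodd : Odd (2 * v - 1) := ⟨v - 1, by ring⟩
  have e1 : a ^ (4 * v) = 1 ∨ a ^ (4 * v) = a ^ ((2 ^ n : ℕ) : ℤ) := by
    apply hdich
    apply odd_cancel h2 a _ _ hodd
    have h6 : (x * x) * a * (x * x)⁻¹ = a := by
      rw [← hk]; group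
    rw [show (x * x) * a * (x * x)⁻¹ = x * (x * a * x⁻¹) * x⁻¹ by group, hv, aux_conj a x _ hv] at h6
    rw [show 4 * v * 2 * (2 * v - 1) = (4 * v - 1) * (4 * v - 1) - 1 by ring, zpow_sub, h6]
    simp
  have e2 : a ^ k = 1 ∨ a ^ k = a ^ ((2 ^ n : ℕ) : ℤ) := by
    apply hdich
    apply odd_cancel h2 a _ _ hodd
    have h6 : x * a ^ k * x⁻¹ = a ^ k := by
      rw [hk]; group
    rw [aux_conj a x _ hv] at h6
    rw [show k * 2 * (2 * v - 1) = (4 * v - 1) * k - k by ring, zpow_sub, h6]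
    simp
  rw [zpow_sub, zpow_one] at hv
  rcases e1 with e1 | e1
  · rw [e1, one_mul] at hv
    rcases e2 with e2 | e2
    · exact Or.inl ⟨_, iso_dihedral a x hx hv (by rw [← hk, e2]) (hG x hx)⟩
    · exact Or.inr (Or.inl ⟨n, iso_quaternion a x (2 ^ n) (by rw [hn, pow_succ']) hx hv
        (by rw [← hk, e2]) (hG x hx)⟩)
  · rw [e1] at hv
    have hv' : x * a * x⁻¹ = a ^ (2 ^ n - 1) := by
      rw [hv, pow_sub _ (Nat.one_le_two_pow), pow_one, zpow_natCast]
    right; right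
    rcases e2 with e2 | e2
    · exact ⟨n + 2, iso_semidihedral a x _ (by rw [hn]; rfl) hx hv' (by rw [← hk, e2]) (hG x hx)⟩
    · have hxa : x * a ∉ Subgroup.zpowers a := by
        intro h
        apply hx
        rw [show x = x * a * a⁻¹ by group]
        exact mul_mem h (inv_mem (Subgroup.mem_zpowers a))
      refine ⟨n + 2, iso_semidihedral a (x * a) _ (by rw [hn]; rfl) hxa ?_ ?_ (hG _ hxa)⟩
      · refine Eq.trans ?_ hv'
        group
      · calc x * a * (x * a) = (x * a * x⁻¹) * (x * x) * a := by group
          _ = 1 := by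
            rw [hv, ← hk, e2, mul_assoc, mul_assoc, ← zpow_add_one, ← zpow_neg_one, ← zpow_add]
            rw [show (-1 : ℤ) + (((2 ^ n : ℕ) : ℤ) + 1) = ((2 ^ n : ℕ) : ℤ) by ring, hMM]

theorem ord4 {G : Type*} [Group G] (g : G) : orderOf g = 4 ↔ g * g ≠ 1 ∧ (g * g) * (g * g) = 1 := by
  constructor
  · intro h
    refine ⟨fun h1 => ?_, ?_⟩
    · rw [← pow_two] at h1
      have := orderOf_dvd_of_pow_eq_one h1
      rw [h] at this; revert this; decide
    · have := pow_orderOf_eq_one g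
      rw [h] at this
      rw [← this]; simp only [pow_succ, pow_zero, one_mul, mul_assoc]
  · rintro ⟨h1, h3⟩
    have : orderOf g = 2 ^ (1 + 1) := by
      apply orderOf_eq_prime_pow
      · rwa [pow_one, pow_two]
      · rw [← h3, show 2 ^ (1 + 1) = 4 from rfl]; simp only [pow_succ, pow_zero, one_mul, mul_assoc]
    simpa using this

open Classical in
theorem count_two {G : Type*} [Group G] [Fintype G] :
    (Finset.univ.filter (fun g : G => orderOf g = 4)).card =
      2 * Nat.card {H : Subgroup G // IsCyclic H ∧ Nat.card H = 4} := by
  have hfin : Fintype (Subgroup G) := Fintype.ofFinite _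
  rw [Nat.card_eq_fintype_card, Fintype.card_subtype]
  rw [Finset.card_eq_sum_card_fiberwise (f := fun g => Subgroup.zpowers g)
    (t := Finset.univ.filter (fun H : Subgroup G => IsCyclic H ∧ Nat.card H = 4))]
  · rw [Finset.sum_const_nat (m := 2), mul_comm]
    intro H hH
    obtain ⟨hc, h4⟩ := (Finset.mem_filter.1 hH).2
    obtain ⟨g0, rfl⟩ := (Subgroup.isCyclic_iff_exists_zpowers_eq_top H).1 hc
    rw [Nat.card_zpowers] at h4
    have h4' := (ord4 g0).1 h4
    rw [show (Finset.filter (fun a => Subgroup.zpowers a = Subgroup.zpowers g0)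
      (Finset.filter (fun g : G => orderOf g = 4) Finset.univ)) = {g0, g0⁻¹} from ?_]
    · apply Finset.card_pair
      intro h
      exact h4'.1 (by nth_rewrite 2 [h]; simp)
    · ext g
      simp only [Finset.mem_filter, Finset.mem_univ, true_and, Finset.mem_insert,
        Finset.mem_singleton]
      constructor
      · rintro ⟨hg, hgz⟩
        have : g ∈ Subgroup.zpowers g0 := hgz ▸ Subgroup.mem_zpowers g
        rw [mem_zpowers_iff_mem_range_orderOf, h4] at this
        obtain ⟨i, hi, rfl⟩ := Finset.mem_image.1 this
        have hg' := (ord4 _).1 hg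
        have hi := Finset.mem_range.1 hi
        interval_cases i
        · simp at hg'
        · simp
        · exact absurd (by rw [← h4'.2]; simp only [pow_succ, pow_zero, one_mul, mul_assoc]) hg'.1
        · right
          apply eq_inv_of_mul_eq_one_left
          rw [← h4'.2]; simp only [pow_succ, pow_zero, one_mul, mul_assoc]
      · rintro (rfl | rfl)
        · exact ⟨h4, rfl⟩
        · exact ⟨by rw [orderOf_inv, h4], Subgroup.zpowers_inv⟩
  · intro g hg
    have hg := (Finset.mem_filter.1 hg).2
    refine Finset.mem_coe.2 (Finset.mem_filter.2 ⟨Finset.mem_univ _, ?_, ?_⟩)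
    · infer_instance
    · rw [Nat.card_zpowers, hg]

/-- the four-group -/
def Esub {G : Type*} [Group G] (y z : G) (hzz : z * z = 1) (hyy : y * y = 1)
    (hzy : z * y = y * z) : Subgroup G where
  carrier := {g | g = 1 ∨ g = z ∨ g = y ∨ g = y * z}
  one_mem' := Or.inl rfl
  mul_mem' := by
    have f1 : ∀ w, z * (y * w) = y * (z * w) := fun w => by rw [← mul_assoc, hzy, mul_assoc]
    have f3 : ∀ w, y * (y * w) = w := fun w => by rw [← mul_assoc, hyy, one_mul]
    rintro g h (rfl | rfl | rfl | rfl) (rfl | rfl | rfl | rfl) <;>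
      simp [mul_assoc, hzz, hyy, hzy, f1, f3]
  inv_mem' := by
    have hz : z⁻¹ = z := inv_eq_of_mul_eq_one_left hzz
    have hy : y⁻¹ = y := inv_eq_of_mul_eq_one_left hyy
    rintro g (rfl | rfl | rfl | rfl) <;> simp [hz, hy, hzy]

open Classical in
theorem nv_case {G : Type*} [Group G] [Finite G] (h2 : IsPGroup 2 G) (hV : NV G)
    (hodd : Odd (Nat.card {H : Subgroup G // IsCyclic H ∧ Nat.card H = 4})) :
    ∃ m : ℕ, Nonempty (G ≃* DihedralGroup m) := by
  obtain ⟨y, z, hz1, hzz, hzc, hy1, hyz, hyy, hyc⟩ := hV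
  have hfG : Fintype G := Fintype.ofFinite G
  have hcount := count_two (G := G)
  have hz' : z⁻¹ = z := inv_eq_of_mul_eq_one_left hzz
  have hy' : y⁻¹ = y := inv_eq_of_mul_eq_one_left hyy
  have hzy := (hzc y).symm
  obtain ⟨E, hE⟩ : ∃ E, E = Esub y z hzz hyy hzy := ⟨_, rfl⟩
  have hmem : ∀ g, g ∈ E ↔ (g = 1 ∨ g = z ∨ g = y ∨ g = y * z) := by
    rw [hE]; intro g; rfl
  have hEn : E.Normal := by
    constructor
    intro e he g
    have hgz : g * z * g⁻¹ = z := by rw [hzc]; group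
    have hyE : g * y * g⁻¹ ∈ E := by
      rw [hmem]
      rcases hyc g with h | h <;> rw [h] <;> simp
    have hzE : z ∈ E := by rw [hmem]; simp
    rcases (hmem e).1 he with rfl | rfl | rfl | rfl
    · simp
    · rwa [hgz]
    · exact hyE
    · rw [show g * (y * z) * g⁻¹ = (g * y * g⁻¹) * (g * z * g⁻¹) by group, hgz]
      exact mul_mem hyE hzE
  -- elements not commuting with y
  have hnc : ∀ x, x * y ≠ y * x → x * y = y * z * x := by
    intro x hx
    rcases hyc x with h | h
    · exact absurd (mul_inv_eq_iff_eq_mul.1 h) hx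
    · exact mul_inv_eq_iff_eq_mul.1 h
  have hsqE : ∀ x, x * y ≠ y * x → x * x ∈ E → x * x = 1 ∨ x * x = z := by
    intro x hx hxx
    rcases (hmem _).1 hxx with h | h | h | h
    · exact Or.inl h
    · exact Or.inr h
    · exact absurd (by rw [← h]; group) hx
    · exfalso
      apply hx
      have : y = x * x * z := by rw [h, mul_assoc, hzz, mul_one]
      rw [this, ← mul_assoc, mul_assoc (x * x), ← hzc x]; group
  have hsqxy : ∀ x, x * y ≠ y * x → (x * y) * (x * y) = z * (x * x) := by
    intro x hx
    have h := hnc x hx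
    have h1 : x * x * y = y * (x * x) := by
      rw [mul_assoc, h, ← mul_assoc, ← mul_assoc, h, mul_assoc _ x z, hzc x, ← mul_assoc,
        mul_assoc y z z, hzz]
      group
    calc (x * y) * (x * y) = (y * z * x) * (x * y) := by rw [h]
      _ = y * z * (x * x * y) := by group
      _ = (y * z * y) * (x * x) := by rw [h1]; group
      _ = _ := by rw [hzc y, mul_assoc z y y, hyy, mul_one]
  obtain ⟨C, hC⟩ : ∃ C, C = Subgroup.centralizer {y} := ⟨_, rfl⟩
  have hCm : ∀ g, g ∈ C ↔ g * y = y * g := by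
    intro g; rw [hC, Subgroup.mem_centralizer_singleton_iff]
  have hEC : E ≤ C := by
    intro e he
    rw [hCm]
    rcases (hmem e).1 he with rfl | rfl | rfl | rfl
    · simp
    · exact hzy
    · rfl
    · rw [mul_assoc, hzy]
  by_cases hCE : C ≤ E
  · -- G = D8
    have hex : ∃ x, x * y ≠ y * x := by
      by_contra hall
      push Not at hall
      have : (Finset.univ.filter (fun g : G => orderOf g = 4)).card = 0 := by
        rw [Finset.card_eq_zero, Finset.filter_eq_empty_iff]
        intro g _ hg
        apply ((ord4 g).1 hg).1
        rcases (hmem g).1 (hCE ((hCm g).2 (hall g))) with rfl | rfl | rfl | rfl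
        · simp
        · exact hzz
        · exact hyy
        · rw [mul_assoc, ← mul_assoc z, hzy, mul_assoc y z z, hzz, mul_one, hyy]
      obtain ⟨k, hk⟩ := hodd
      omega
    obtain ⟨x, hx⟩ := hex
    have hprod : ∀ g h, g * y ≠ y * g → h * y ≠ y * h → g * h ∈ E := by
      intro g h hg hh
      apply hCE
      rw [hCm]
      calc g * h * y = g * (h * y) := by group
        _ = (g * y) * (z * h) := by rw [hnc h hh]; group
        _ = y * (z * g * z) * h := by rw [hnc g hg]; group
        _ = y * (g * h) := by rw [← hzc g, mul_assoc g z z, hzz, mul_one]; group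
    obtain ⟨r, hr, hrr⟩ : ∃ r, r * y ≠ y * r ∧ r * r = z := by
      rcases hsqE x hx (hprod x x hx hx) with h | h
      · refine ⟨x * y, ?_, ?_⟩
        · intro h'
          apply hx
          rw [mul_assoc, hyy, mul_one] at h'
          nth_rewrite 2 [h']
          rw [← mul_assoc, ← mul_assoc, hyy, one_mul]
        · rw [hsqxy x hx, h, mul_one]
      · exact ⟨x, hx, h⟩
    have hry := hnc r hr
    have hri : r⁻¹ = z * r := by
      apply inv_eq_of_mul_eq_one_left
      rw [mul_assoc, hrr, hzz]
    have hr2 : r ^ (2 : ℤ) = z := by rw [← hrr]; exact zpow_two r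
    refine ⟨_, iso_dihedral r y ?_ ?_ hyy ?_⟩
    · rintro ⟨i, hi⟩
      apply hr
      rw [← show r ^ i = y from hi]; group
    · rw [hri, hy', mul_assoc, hry, ← mul_assoc, ← mul_assoc, hyy, one_mul]
    · have hEm : ∀ g ∈ E, ∃ i : ℤ, g = r ^ i ∨ g = y * r ^ i := by
        intro g hg
        rcases (hmem g).1 hg with h | h | h | h
        · exact ⟨0, Or.inl (by rw [h, zpow_zero])⟩
        · exact ⟨2, Or.inl (by rw [h, hr2])⟩
        · exact ⟨0, Or.inr (by rw [h, zpow_zero, mul_one])⟩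
        · exact ⟨2, Or.inr (by rw [h, hr2])⟩
      intro g
      by_cases hg : g * y = y * g
      · exact hEm g (hCE ((hCm g).2 hg))
      · obtain ⟨i, hi | hi⟩ := hEm _ (hprod g r hg hr)
        · exact ⟨i - 1, Or.inl (by rw [zpow_sub_one, ← hi]; group)⟩
        · exact ⟨i - 1, Or.inr (by rw [zpow_sub_one, ← mul_assoc, ← hi]; group)⟩
  · exfalso
    obtain ⟨D, hD⟩ : ∃ D, D = C.map (QuotientGroup.mk' E) := ⟨_, rfl⟩
    have hDm : ∀ x : G, (x : G ⧸ E) ∈ D ↔ x ∈ C := by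
      intro x
      rw [hD, Subgroup.mem_map]
      constructor
      · rintro ⟨c, hc, hcx⟩
        have := QuotientGroup.eq.1 hcx
        have := mul_mem hc (hEC this)
        simpa using this
      · intro h
        exact ⟨x, h, rfl⟩
    have hDne : D ≠ ⊥ := by
      rw [hD]
      intro h
      apply hCE
      rw [Subgroup.map_eq_bot_iff, QuotientGroup.ker_mk'] at h
      exact h
    let f : G ⧸ E → ℕ := fun q => (Finset.univ.filter (fun g : G => orderOf g = 4 ∧ (g : G ⧸ E) = q)).card
    let b : G → ℕ := fun x => if orderOf x = 4 then 1 else 0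
    have hf : ∀ x : G, f x = b x + b (x * z) + b (x * y) + b (x * (y * z)) := by
      intro x
      have : (Finset.univ.filter (fun g : G => orderOf g = 4 ∧ (g : G ⧸ E) = (x : G ⧸ E))) =
        (({1, z, y, y * z} : Finset G).map (mulLeftEmbedding x)).filter (fun g => orderOf g = 4) := by
        ext g
        simp only [Finset.mem_filter, Finset.mem_univ, true_and, Finset.mem_map,
          mulLeftEmbedding_apply]
        rw [and_comm]
        apply and_congr_left
        intro _
        rw [eq_comm, QuotientGroup.eq, hmem]
        simp only [Finset.mem_insert, Finset.mem_singleton]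
        constructor
        · intro h
          exact ⟨x⁻¹ * g, h, by group⟩
        · rintro ⟨e, he, rfl⟩
          simpa using he
      simp only [f]
      rw [this, Finset.card_filter, Finset.sum_map]
      have d1 : y * z ≠ 1 := fun h => hyz (by rw [eq_inv_of_mul_eq_one_left h, hz'])
      have d2 : y * z ≠ z := fun h => hy1 (by simpa using h)
      have d3 : y * z ≠ y := fun h => hz1 (by simpa using h)
      rw [Finset.sum_insert (by simp [hz1.symm, hy1.symm, d1.symm]),
        Finset.sum_insert (by simp [hyz.symm, d2.symm]), Finset.sum_insert (by simp [hz1]),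
        Finset.sum_singleton]
      simp [b, add_assoc]
    have hbz : ∀ x, b (x * z) = b x := by
      intro x
      have : (x * z) * (x * z) = x * x := by
        rw [mul_assoc, ← mul_assoc z, ← hzc x, mul_assoc x z z, hzz, mul_one]
      simp only [b, ord4, this]
    have hf2 : ∀ x : G, f x = 2 * b x + 2 * b (x * y) := by
      intro x
      rw [hf, hbz, ← mul_assoc, hbz]; ring
    have hfinv : ∀ q, f q⁻¹ = f q := by
      intro q
      apply Finset.card_nbij' (fun g => g⁻¹) (fun g => g⁻¹)
      · intro g hg
        simp only [Finset.coe_filter, Finset.mem_univ, true_and, Set.mem_ofPred_eq] at hg ⊢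
        rw [orderOf_inv, QuotientGroup.mk_inv, hg.2, inv_inv]
        exact ⟨hg.1, rfl⟩
      · intro g hg
        simp only [Finset.coe_filter, Finset.mem_univ, true_and, Set.mem_ofPred_eq] at hg ⊢
        rw [orderOf_inv, QuotientGroup.mk_inv, hg.2]
        exact ⟨hg.1, rfl⟩
      · intro g _; simp
      · intro g _; simp
    have hsum : (Finset.univ.filter (fun g : G => orderOf g = 4)).card = ∑ q : G ⧸ E, f q := by
      rw [Finset.card_eq_sum_card_fiberwise (f := fun g : G => (g : G ⧸ E)) (t := Finset.univ)
        (fun _ _ => by simp)]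
      apply Finset.sum_congr rfl
      intro q _
      simp only [f, Finset.filter_filter]
    have hmain : ∑ q : G ⧸ E, ((f q : ZMod 4) - if q ∈ D then 0 else 2) = 0 := by
      apply Finset.sum_involution (fun q _ => q⁻¹)
      · intro q _
        rw [hfinv]
        obtain ⟨x, rfl⟩ := QuotientGroup.mk_surjective q
        rw [inv_mem_iff, hf2]
        have h4 : (4 : ZMod 4) = 0 := rfl
        split_ifs <;> push_cast
        · linear_combination ((b x : ZMod 4) + b (x * y)) * h4
        · linear_combination ((b x : ZMod 4) + b (x * y) - 1) * h4
      · intro q _ hne heq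
        apply hne
        obtain ⟨x, rfl⟩ := QuotientGroup.mk_surjective q
        have h4 : (4 : ZMod 4) = 0 := rfl
        rw [hDm, hCm, hf2]
        split_ifs with hx
        · have : (x * y) * (x * y) = x * x := by
            calc (x * y) * (x * y) = (x * y) * (y * x) := by rw [hx]
              _ = x * (y * y) * x := by group
              _ = _ := by rw [hyy, mul_one]
          have hbb : b (x * y) = b x := by simp only [b, ord4, this]
          rw [hbb]; push_cast
          linear_combination (b x : ZMod 4) * h4
        · have hxx : x * x ∈ E := by
            have := QuotientGroup.eq.1 heq
            simpa using this
          have h5 := hsqxy x hx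
          rcases hsqE x hx hxx with h | h
          · have b1 : b x = 0 := by simp [b, ord4, h]
            have b2 : b (x * y) = 1 := by simp [b, ord4, h5, h, hz1, hzz]
            rw [b1, b2]; simp
          · have b1 : b x = 1 := by simp [b, ord4, h, hz1, hzz]
            have b2 : b (x * y) = 0 := by simp [b, ord4, h5, h, hzz]
            rw [b1, b2]; simp
      · intros; simp
      · intros; simp
    have hev : Even (Finset.univ.filter (fun q : G ⧸ E => ¬ q ∈ D)).card := by
      have hq := h2.to_quotient E
      have hd1 : 2 ∣ Nat.card D := by
        rcases (hq.to_subgroup D).card_eq_or_dvd with h | h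
        · exact absurd (Subgroup.card_eq_one.1 h) hDne
        · exact h
      have hd2 : 2 ∣ Nat.card (G ⧸ E) := hd1.trans (Subgroup.card_subgroup_dvd_card D)
      have h6 := Finset.card_filter_add_card_filter_not (s := Finset.univ) (fun q : G ⧸ E => q ∈ D)
      rw [Finset.card_univ, ← Nat.card_eq_fintype_card] at h6
      have h7 : Nat.card D = (Finset.univ.filter (fun q : G ⧸ E => q ∈ D)).card := by
        rw [Nat.card_eq_fintype_card]
        exact Fintype.card_subtype _
      rw [← h7] at h6
      rw [even_iff_two_dvd]
      omega
    obtain ⟨e, he⟩ := hev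
    rw [Finset.sum_sub_distrib, ← Nat.cast_sum, ← hsum, hcount] at hmain
    have h8 : ∑ q : G ⧸ E, (if q ∈ D then (0 : ZMod 4) else 2) = 0 := by
      have h4 : (4 : ZMod 4) = 0 := rfl
      rw [Finset.sum_ite, Finset.sum_const_zero, zero_add, Finset.sum_const, he, nsmul_eq_mul]
      push_cast
      linear_combination (e : ZMod 4) * h4
    rw [h8, sub_zero, ZMod.natCast_eq_zero_iff] at hmain
    obtain ⟨k, hk⟩ := hodd
    omega

theorem stmt_14 (G : Type*) [Group G] [Finite G]
    (h2 : IsPGroup 2 G)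
    (hodd : Odd (Nat.card {H : Subgroup G // IsCyclic H ∧ Nat.card H = 4})) :
    IsCyclic G ∨
    (∃ m : ℕ, Nonempty (G ≃* DihedralGroup m)) ∨
    (∃ m : ℕ, Nonempty (G ≃* QuaternionGroup (2 ^ m))) ∨
    (∃ m : ℕ, Nonempty (G ≃* SemidihedralGroup m)) := by
  by_cases hV : NV G
  · exact Or.inr (Or.inl (nv_case h2 hV hodd))
  · exact classify h2 hV
end
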